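/- arXiv:1407.4208 — 6 statements merged into one kernel-verified Lean document; each statement's English description precedes it below -/
import Mathlib

section
/- There exists a constant C > 0 (independent of N and s) such that for all N, s ∈ ℕ one has disc(N,s) ≤ C·√(s/N); equivalently, for every N and s there exists an N-element point set P in [0,1)^s whose star-discrepancy satisfies D*(P) ≤ C·√(s/N). -/
open Finset

/-- Local discrepancy of the point set `x` at the corner point `t`:
`Δ(t) = #{n : x_n ∈ [0,t)}/N − ∏_j t_j`. -/
noncomputable def localDisc {N s : ℕ} (x : Fin N → Fin s → ℝ) (t : Fin s → ℝ) : ℝ :=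
  ((univ.filter fun n => ∀ j, x n j < t j).card : ℝ) / N - ∏ j, t j

/-- Star-discrepancy `D*(x) = sup_{t ∈ [0,1]^s} |Δ(t)|`. -/
noncomputable def starDisc {N s : ℕ} (x : Fin N → Fin s → ℝ) : ℝ :=
  sSup {d : ℝ | ∃ t : Fin s → ℝ, (∀ j, t j ∈ Set.Icc (0:ℝ) 1) ∧ d = |localDisc x t|}

/-- `N`-th minimal star-discrepancy `disc(N,s)`, the infimum of `D*` over all
`N`-element point sets in `[0,1)^s`. -/
noncomputable def minDisc (N s : ℕ) : ℝ :=
  sInf {d : ℝ | ∃ x : Fin N → Fin s → ℝ,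
    (∀ n j, x n j ∈ Set.Ico (0:ℝ) 1) ∧ d = starDisc x}

/-- Inverse of the star-discrepancy: `N(s,ε) = min {N ≥ 1 : disc(N,s) ≤ ε}`. -/
noncomputable def invDisc (s : ℕ) (ε : ℝ) : ℕ :=
  sInf {N : ℕ | 1 ≤ N ∧ minDisc N s ≤ ε}


open MeasureTheory

lemma aux_card (s R : ℕ) (hR : 1 ≤ R) :
    (((Fintype.piFinset (fun _ : Fin s => range (s * R + 1))).filter
      (fun m => ∑ j, m j ≤ s * R)).card : ℝ) ≤ (6 * R : ℝ) ^ s := by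
  have hR' : (1:ℝ) ≤ R := by exact_mod_cast hR
  set x : ℝ := R / (R + 1) with hx
  have hx0 : 0 < x := by positivity
  have hx1 : x < 1 := by rw [hx, div_lt_one (by positivity)]; linarith
  have h1x : (1 - x)⁻¹ = R + 1 := by rw [hx]; field_simp; ring
  have hxR : (x ^ R)⁻¹ ≤ 3 := by
    have h1 : x⁻¹ ≤ Real.exp (1 / R) := by
      have := Real.add_one_le_exp (1 / (R:ℝ))
      refine le_trans (le_of_eq ?_) this
      rw [hx]; field_simp; ring
    calc (x ^ R)⁻¹ = (x⁻¹) ^ R := by rw [inv_pow]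
      _ ≤ (Real.exp (1 / R)) ^ R := pow_le_pow_left₀ (by positivity) h1 _
      _ = Real.exp 1 := by rw [← Real.exp_nat_mul]; congr 1; field_simp
      _ ≤ 3 := by linarith [Real.exp_one_lt_d9]
  have key : (((Fintype.piFinset (fun _ : Fin s => range (s * R + 1))).filter
      (fun m => ∑ j, m j ≤ s * R)).card : ℝ) * x ^ (s * R) ≤ ((1 - x)⁻¹) ^ s := by
    calc _ = ∑ m ∈ (Fintype.piFinset (fun _ : Fin s => range (s * R + 1))).filter
            (fun m => ∑ j, m j ≤ s * R), x ^ (s * R) := by simp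
      _ ≤ ∑ m ∈ (Fintype.piFinset (fun _ : Fin s => range (s * R + 1))).filter
            (fun m => ∑ j, m j ≤ s * R), ∏ j, x ^ (m j) := by
          refine Finset.sum_le_sum fun m hm => ?_
          rw [Finset.prod_pow_eq_pow_sum]
          exact pow_le_pow_of_le_one hx0.le hx1.le (Finset.mem_filter.1 hm).2
      _ ≤ ∑ m ∈ Fintype.piFinset (fun _ : Fin s => range (s * R + 1)), ∏ j, x ^ (m j) := by
          refine Finset.sum_le_sum_of_subset_of_nonneg (Finset.filter_subset _ _) ?_
          intros; positivity
      _ = ∏ _j : Fin s, ∑ i ∈ range (s * R + 1), x ^ i := by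
          rw [Finset.prod_univ_sum]
      _ ≤ _ := by
          rw [Finset.prod_const, Finset.card_univ, Fintype.card_fin]
          refine pow_le_pow_left₀ (by positivity) ?_ _
          rw [← tsum_geometric_of_lt_one hx0.le hx1]
          exact (summable_geometric_of_lt_one hx0.le hx1).sum_le_tsum _ (fun i _ => by positivity)
  have : (((Fintype.piFinset (fun _ : Fin s => range (s * R + 1))).filter
      (fun m => ∑ j, m j ≤ s * R)).card : ℝ) ≤ ((1 - x)⁻¹) ^ s * (x ^ (s * R))⁻¹ := by
    rw [← div_eq_mul_inv, le_div_iff₀ (by positivity)]; exact key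
  refine this.trans ?_
  rw [mul_comm s R, pow_mul, ← inv_pow, ← mul_pow, h1x]
  refine pow_le_pow_left₀ (by positivity) ?_ _
  nlinarith [inv_pos.2 (pow_pos hx0 R)]

lemma aux_ivt {s : ℕ} (δ : ℝ) (hδ1 : δ ≤ 1) (t : Fin s → ℝ)
    (ht : ∀ j, t j ∈ Set.Icc (0:ℝ) 1) (hp : ∏ j, t j ≤ δ) :
    ∃ v : Fin s → ℝ, (∀ j, v j ∈ Set.Icc (0:ℝ) 1) ∧ (∀ j, t j ≤ v j) ∧ ∏ j, v j = δ := by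
  have hc : ContinuousOn (fun c : ℝ => ∏ j, max (t j) c) (Set.Icc 0 1) := by fun_prop
  have := intermediate_value_Icc (zero_le_one (α := ℝ)) hc
  have h0 : ∏ j, max (t j) 0 = ∏ j, t j :=
    Finset.prod_congr rfl fun j _ => max_eq_left (ht j).1
  have h1 : ∏ j, max (t j) 1 = 1 :=
    Finset.prod_eq_one fun j _ => max_eq_right (ht j).2
  obtain ⟨c, hc, hcv⟩ := this (show δ ∈ Set.Icc _ _ by
    simp only [h0, h1]; exact ⟨hp, hδ1⟩)
  refine ⟨fun j => max (t j) c, fun j => ⟨le_max_of_le_left (ht j).1, max_le (ht j).2 hc.2⟩,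
    fun j => le_max_left _ _, hcv⟩

/-- Bracketing cover with few elements. -/
lemma aux_cover (s : ℕ) (hs : 1 ≤ s) (k : ℕ) :
    ∃ Γ : Finset (Fin s → ℝ), ((Γ.card : ℝ) ≤ (18 * 4 ^ k : ℝ) ^ s) ∧
      (∀ y ∈ Γ, ∀ j, y j ∈ Set.Icc (0:ℝ) 1) ∧
      ∀ t : Fin s → ℝ, (∀ j, t j ∈ Set.Icc (0:ℝ) 1) →
        ∃ u ∈ Γ, ∃ v ∈ Γ, (∀ j, u j ≤ t j) ∧ (∀ j, t j ≤ v j) ∧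
          ∏ j, v j - ∏ j, u j ≤ 2 * (1 / 2) ^ k := by
  classical
  set δ : ℝ := (1 / 2) ^ k with hδ
  have hδ0 : 0 < δ := by positivity
  have hδ1 : δ ≤ 1 := pow_le_one₀ (by norm_num) (by norm_num)
  have hs' : (1:ℝ) ≤ s := by exact_mod_cast hs
  set h : ℝ := δ / s with hh
  have hh0 : 0 < h := by positivity
  set M := (Fintype.piFinset (fun _ : Fin s => range (s * 4 ^ k + 1))).filter
      (fun m => ∑ j, m j ≤ s * 4 ^ k) with hM
  have hMc := aux_card s (4 ^ k) (Nat.one_le_pow _ _ (by norm_num))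
  rw [← hM] at hMc
  let V : (Fin s → ℕ) → Fin s → ℝ := fun m j => Real.exp (-(h * m j))
  let U : (Fin s → ℕ) → Fin s → ℝ := fun m j => Real.exp (-(h * (m j + 1)))
  -- main rounding step
  have main : ∀ t : Fin s → ℝ, (∀ j, t j ∈ Set.Icc (0:ℝ) 1) → δ ≤ ∏ j, t j →
      ∃ m ∈ M, (∀ j, U m j ≤ t j) ∧ (∀ j, t j ≤ V m j) ∧ ∏ j, V m j - ∏ j, U m j ≤ δ := by
    intro t ht hp
    have htpos : ∀ j, 0 < t j := by
      intro j
      refine lt_of_le_of_ne (ht j).1 fun h0 => ?_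
      have : ∏ j, t j = 0 := Finset.prod_eq_zero (Finset.mem_univ j) h0.symm
      linarith
    have hlog : ∀ j, 0 ≤ -Real.log (t j) / h := fun j =>
      div_nonneg (neg_nonneg.2 (Real.log_nonpos (ht j).1 (ht j).2)) hh0.le
    let m : Fin s → ℕ := fun j => ⌊-Real.log (t j) / h⌋₊
    have hm1 : ∀ j, h * m j ≤ - Real.log (t j) := fun j => by
      have := Nat.floor_le (hlog j)
      rw [le_div_iff₀ hh0] at this
      rw [mul_comm]; exact this
    have hm2 : ∀ j, - Real.log (t j) ≤ h * (m j + 1) := fun j => by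
      have := (Nat.lt_floor_add_one (-Real.log (t j) / h)).le
      rw [div_le_iff₀ hh0] at this
      rw [mul_comm]; exact this
    have hsum : ∑ j, m j ≤ s * 4 ^ k := by
      have h1 : h * ∑ j, (m j : ℝ) ≤ - Real.log δ := by
        rw [Finset.mul_sum]
        calc _ ≤ ∑ j, - Real.log (t j) := Finset.sum_le_sum fun j _ => hm1 j
          _ = - Real.log (∏ j, t j) := by
            rw [Real.log_prod (fun j _ => (htpos j).ne'), Finset.sum_neg_distrib]
          _ ≤ _ := by
            have := Real.log_le_log hδ0 hp
            linarith
      have h2 : - Real.log δ ≤ δ⁻¹ := by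
        rw [← Real.log_inv]
        have := Real.log_le_sub_one_of_pos (inv_pos.2 hδ0)
        linarith
      have h3 : (∑ j, (m j : ℝ)) ≤ s * (δ⁻¹ * δ⁻¹) := by
        have h4 : δ * ∑ j, (m j : ℝ) ≤ s * δ⁻¹ := by
          have := h1.trans h2
          rw [hh] at this
          have h5 := mul_le_mul_of_nonneg_left this (by positivity : (0:ℝ) ≤ s)
          calc _ = (s:ℝ) * (δ / s * ∑ j, (m j : ℝ)) := by field_simp
            _ ≤ _ := h5
        calc _ = δ⁻¹ * (δ * ∑ j, (m j : ℝ)) := by field_simp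
          _ ≤ δ⁻¹ * (s * δ⁻¹) := mul_le_mul_of_nonneg_left h4 (by positivity)
          _ = _ := by ring
      have h6 : δ⁻¹ * δ⁻¹ = 4 ^ k := by
        rw [hδ, ← inv_pow, ← mul_pow]; norm_num
      rw [h6] at h3
      exact_mod_cast h3
    refine ⟨m, ?_, ?_, ?_, ?_⟩
    · rw [hM, Finset.mem_filter]
      refine ⟨?_, hsum⟩
      rw [Fintype.mem_piFinset]
      intro j
      rw [Finset.mem_range]
      have := Finset.single_le_sum (f := m) (fun i _ => Nat.zero_le _) (Finset.mem_univ j)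
      omega
    · intro j
      rw [← Real.exp_log (htpos j)]
      exact Real.exp_le_exp.2 (by linarith [hm2 j])
    · intro j
      rw [← Real.exp_log (htpos j)]
      exact Real.exp_le_exp.2 (by linarith [hm1 j])
    · have e1 : ∏ j, U m j = (∏ j, V m j) * Real.exp (-δ) := by
        have : ∀ j, U m j = V m j * Real.exp (-h) := fun j => by
          simp only [U, V]; rw [← Real.exp_add]; congr 1; ring
        rw [Finset.prod_congr rfl (fun j _ => this j), Finset.prod_mul_distrib, Finset.prod_const,
          Finset.card_univ, Fintype.card_fin, ← Real.exp_nat_mul]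
        congr 2
        rw [hh]; field_simp
      have e2 : ∏ j, V m j ≤ 1 := Finset.prod_le_one (fun j _ => (Real.exp_pos _).le)
        (fun j _ => Real.exp_le_one_iff.2 (by have : 0 ≤ h * m j := by positivity
                                              linarith))
      have e3 : 0 ≤ ∏ j, V m j := Finset.prod_nonneg (fun j _ => (Real.exp_pos _).le)
      have e4 := Real.add_one_le_exp (-δ)
      rw [e1]
      nlinarith
  refine ⟨M.image V ∪ M.image U ∪ {0}, ?_, ?_, ?_⟩
  · have c1 : (M.image V ∪ M.image U ∪ {0}).card ≤ M.card + M.card + 1 := by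
      refine (Finset.card_union_le _ _).trans ?_
      refine Nat.add_le_add ((Finset.card_union_le _ _).trans
        (Nat.add_le_add Finset.card_image_le Finset.card_image_le)) (by simp)
    have c2 : ((M.image V ∪ M.image U ∪ {0}).card : ℝ) ≤ M.card + M.card + 1 := by
      exact_mod_cast c1
    push_cast at hMc
    have c3 : (1:ℝ) ≤ (6 * 4 ^ k : ℝ) ^ s := by
      apply one_le_pow₀
      have : (1:ℝ) ≤ 4 ^ k := one_le_pow₀ (by norm_num)
      linarith
    have c4 : (3:ℝ) ≤ 3 ^ s := by
      calc (3:ℝ) = 3 ^ 1 := by norm_num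
        _ ≤ _ := pow_le_pow_right₀ (by norm_num) hs
    calc _ ≤ 3 * (6 * 4 ^ k : ℝ) ^ s := by linarith
      _ ≤ 3 ^ s * (6 * 4 ^ k : ℝ) ^ s := by gcongr
      _ = _ := by rw [← mul_pow]; congr 1; ring
  · intro y hy j
    simp only [Finset.mem_union, Finset.mem_image, Finset.mem_singleton] at hy
    rcases hy with (⟨m, _, rfl⟩ | ⟨m, _, rfl⟩) | rfl
    · refine ⟨(Real.exp_pos _).le, Real.exp_le_one_iff.2 ?_⟩
      have : 0 ≤ h * m j := by positivity
      linarith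
    · refine ⟨(Real.exp_pos _).le, Real.exp_le_one_iff.2 ?_⟩
      have : 0 ≤ h * (m j + 1) := by positivity
      linarith
    · simp
  · intro t ht
    rcases le_total δ (∏ j, t j) with hp | hp
    · obtain ⟨m, hm, h1, h2, h3⟩ := main t ht hp
      refine ⟨U m, ?_, V m, ?_, h1, h2, by linarith⟩
      · simp only [Finset.mem_union, Finset.mem_image]
        exact Or.inl (Or.inr ⟨m, hm, rfl⟩)
      · simp only [Finset.mem_union, Finset.mem_image]
        exact Or.inl (Or.inl ⟨m, hm, rfl⟩)
    · obtain ⟨v, hv, htv, hvp⟩ := aux_ivt δ hδ1 t ht hp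
      obtain ⟨m, hm, h1, h2, h3⟩ := main v hv hvp.ge
      refine ⟨0, by simp, V m, ?_, fun j => (ht j).1, fun j => (htv j).trans (h2 j), ?_⟩
      · simp only [Finset.mem_union, Finset.mem_image]
        exact Or.inl (Or.inl ⟨m, hm, rfl⟩)
      · have e1 : ∏ j, U m j ≤ ∏ j, v j :=
          Finset.prod_le_prod (fun j _ => (Real.exp_pos _).le) (fun j _ => h1 j)
        have e0 : ∏ j : Fin s, (0 : Fin s → ℝ) j = 0 :=
          Finset.prod_eq_zero (Finset.mem_univ ⟨0, hs⟩) rfl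
        rw [e0]; linarith
/-- MGF bound -/
lemma aux_mgf {Ω : Type*} [MeasurableSpace Ω] (μ : Measure Ω) [IsProbabilityMeasure μ]
    (A : Set Ω) (hA : MeasurableSet A) (σ l : ℝ) (hσ : μ.real A ≤ σ) (hl : |l| ≤ 1) :
    Integrable (fun ω => Real.exp (l * (A.indicator 1 ω - μ.real A))) μ ∧
    ∫ ω, Real.exp (l * (A.indicator 1 ω - μ.real A)) ∂μ ≤ Real.exp (l ^ 2 * σ) := by
  set p := μ.real A with hp
  have hp0 : 0 ≤ p := measureReal_nonneg
  have hp1 : p ≤ 1 := measureReal_le_one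
  have hI : Integrable (A.indicator (1 : Ω → ℝ)) μ := (integrable_const (1:ℝ)).indicator hA
  have hfun : (fun ω => Real.exp (l * (A.indicator 1 ω - p))) =
      fun ω => Real.exp (l * (0 - p)) +
        (Real.exp (l * (1 - p)) - Real.exp (l * (0 - p))) * A.indicator (1 : Ω → ℝ) ω := by
    funext ω
    by_cases h : ω ∈ A <;> simp [h]
  rw [hfun]
  refine ⟨(integrable_const _).add (hI.const_mul _), ?_⟩
  rw [integral_add (integrable_const _) (hI.const_mul _), integral_const, integral_const_mul,
    integral_indicator_one hA, ← hp]
  simp only [probReal_univ, one_smul]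
  have q : ∀ x : ℝ, |x| ≤ 1 → Real.exp x ≤ 1 + x + x ^ 2 := fun x hx => by
    have := (abs_le.1 (Real.abs_exp_sub_one_sub_id_le hx)).2
    linarith
  have b1 := q (l * (0 - p)) (by
    rw [abs_mul]; exact mul_le_one₀ hl (abs_nonneg _) (by rw [abs_le]; constructor <;> linarith))
  have b2 := q (l * (1 - p)) (by
    rw [abs_mul]; exact mul_le_one₀ hl (abs_nonneg _) (by rw [abs_le]; constructor <;> linarith))
  calc _ = (1 - p) * Real.exp (l * (0 - p)) + p * Real.exp (l * (1 - p)) := by ring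
    _ ≤ (1 - p) * (1 + l * (0 - p) + (l * (0 - p)) ^ 2) +
        p * (1 + l * (1 - p) + (l * (1 - p)) ^ 2) :=
      add_le_add (mul_le_mul_of_nonneg_left b1 (by linarith)) (mul_le_mul_of_nonneg_left b2 hp0)
    _ = 1 + l ^ 2 * (p * (1 - p)) := by ring
    _ ≤ 1 + l ^ 2 * σ := by
      have : p * (1 - p) ≤ σ := by nlinarith
      nlinarith [sq_nonneg l]
    _ ≤ _ := by linarith [Real.add_one_le_exp (l ^ 2 * σ)]

lemma aux_prob {Ω ι : Type*} [MeasurableSpace Ω] (μ : Measure Ω) [IsProbabilityMeasure μ]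
    (N : ℕ) (I : Finset ι) (A : ι → Set Ω) (hA : ∀ i ∈ I, MeasurableSet (A i))
    (σ l u : ι → ℝ) (hσ : ∀ i ∈ I, μ.real (A i) ≤ σ i) (hl0 : ∀ i ∈ I, 0 < l i)
    (hl : ∀ i ∈ I, l i ≤ 1)
    (hsum : ∑ i ∈ I, 2 * Real.exp (N * (l i ^ 2 * σ i) - l i * (N * u i)) < 1) :
    ∃ x : Fin N → Ω, ∀ i ∈ I,
      |∑ n, ((A i).indicator (1 : Ω → ℝ) (x n) - μ.real (A i))| ≤ N * u i := by
  let S : ι → (Fin N → Ω) → ℝ := fun i x =>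
    ∑ n, ((A i).indicator (1 : Ω → ℝ) (x n) - μ.real (A i))
  let T : ℝ → ι → (Fin N → Ω) → ℝ := fun e i x => Real.exp (e * l i * S i x)
  have hT : ∀ e : ℝ, |e| = 1 → ∀ i ∈ I, Integrable (T e i) (Measure.pi fun _ => μ) ∧
      ∫ x, T e i x ∂(Measure.pi fun _ => μ) ≤ Real.exp (N * (l i ^ 2 * σ i)) := by
    intro e he i hi
    have hm := aux_mgf μ (A i) (hA i hi) (σ i) (e * l i) (hσ i hi) (by
      rw [abs_mul, he, one_mul, abs_of_pos (hl0 i hi)]; exact hl i hi)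
    have hTe : T e i = fun x => ∏ n,
        Real.exp (e * l i * ((A i).indicator (1 : Ω → ℝ) (x n) - μ.real (A i))) := by
      funext x
      simp only [T, S]
      rw [Finset.mul_sum, Real.exp_sum]
    rw [hTe]
    constructor
    · exact Integrable.fintype_prod (fun _ => hm.1)
    · rw [integral_fintype_prod_eq_prod (𝕜 := ℝ) (μ := fun _ : Fin N => μ)
        (fun _ ω => Real.exp (e * l i * ((A i).indicator (1 : Ω → ℝ) ω - μ.real (A i))))]
      rw [Finset.prod_const, Finset.card_univ, Fintype.card_fin]
      rw [Real.exp_nat_mul]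
      refine pow_le_pow_left₀ (integral_nonneg fun _ => (Real.exp_pos _).le) ?_ _
      have h2 : (e * l i) ^ 2 = l i ^ 2 := by
        rw [mul_pow, ← sq_abs e, he]; ring
      rw [← h2]; exact hm.2
  let Φ : (Fin N → Ω) → ℝ := fun x =>
    ∑ i ∈ I, (T 1 i x + T (-1) i x) * Real.exp (-(l i * (N * u i)))
  have h1 : |(1:ℝ)| = 1 := by norm_num
  have h2 : |(-1:ℝ)| = 1 := by norm_num
  have hint : ∀ i ∈ I, Integrable
      (fun x => (T 1 i x + T (-1) i x) * Real.exp (-(l i * (N * u i))))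
      (Measure.pi fun _ => μ) := fun i hi =>
    (((hT 1 h1 i hi).1.add (hT (-1) h2 i hi).1)).mul_const _
  have hΦi : Integrable Φ (Measure.pi fun _ => μ) := integrable_finsetSum _ hint
  have hΦ : ∫ x, Φ x ∂(Measure.pi fun _ => μ) < 1 := by
    refine lt_of_le_of_lt ?_ hsum
    simp only [Φ]
    rw [integral_finsetSum _ hint]
    refine Finset.sum_le_sum fun i hi => ?_
    rw [integral_mul_const, integral_add (hT 1 h1 i hi).1 (hT (-1) h2 i hi).1, sub_eq_add_neg,
      Real.exp_add, ← mul_assoc 2]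
    refine mul_le_mul_of_nonneg_right ?_ (Real.exp_pos _).le
    linarith [(hT 1 h1 i hi).2, (hT (-1) h2 i hi).2]
  obtain ⟨x, hx⟩ := exists_le_integral hΦi
  refine ⟨x, fun i hi => ?_⟩
  have hterm : (T 1 i x + T (-1) i x) * Real.exp (-(l i * (N * u i))) < 1 := by
    refine lt_of_le_of_lt ?_ (hx.trans_lt hΦ)
    exact Finset.single_le_sum (f := fun i =>
      (T 1 i x + T (-1) i x) * Real.exp (-(l i * (N * u i)))) (fun i _ => by positivity) hi
  have hfin : ∀ e : ℝ, T e i x ≤ T 1 i x + T (-1) i x → e * S i x ≤ N * u i := by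
    intro e he
    have h3 : T e i x * Real.exp (-(l i * (N * u i))) < 1 :=
      lt_of_le_of_lt (mul_le_mul_of_nonneg_right he (Real.exp_pos _).le) hterm
    simp only [T] at h3
    rw [← Real.exp_add, Real.exp_lt_one_iff] at h3
    have h4 : l i * (e * S i x) < l i * (N * u i) := by linarith
    exact (lt_of_mul_lt_mul_left h4 (hl0 i hi).le).le
  have p1 : 0 < T 1 i x := Real.exp_pos _
  have p2 : 0 < T (-1) i x := Real.exp_pos _
  rw [abs_le]
  have r1 := hfin 1 (by linarith)
  have r2 := hfin (-1) (by linarith)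
  change -(N * u i) ≤ S i x ∧ S i x ≤ N * u i
  constructor <;> linarith

abbrev ICO : Type := ↥(Set.Ico (0:ℝ) 1)

noncomputable def auxNu : Measure ICO := Measure.comap Subtype.val volume

lemma auxNu_apply (S : Set ICO) : auxNu S = volume ((Subtype.val : ICO → ℝ) '' S) :=
  comap_subtype_coe_apply measurableSet_Ico _ _

instance aux_inst : IsProbabilityMeasure auxNu :=
  ⟨by rw [auxNu_apply, Set.image_univ, Subtype.range_coe]; simp⟩

def auxBox {s : ℕ} (y : Fin s → ℝ) : Set (Fin s → ICO) := {z | ∀ j, (z j : ℝ) < y j}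

lemma auxBox_eq {s : ℕ} (y : Fin s → ℝ) :
    auxBox y = Set.pi Set.univ (fun j => {w : ICO | (w:ℝ) < y j}) := by
  ext z; simp [auxBox]

lemma auxBox_meas {s : ℕ} (y : Fin s → ℝ) : MeasurableSet (auxBox y) := by
  rw [auxBox_eq]
  exact MeasurableSet.univ_pi fun j => measurableSet_lt measurable_subtype_coe measurable_const

lemma auxBox_vol {s : ℕ} (y : Fin s → ℝ) (hy : ∀ j, y j ∈ Set.Icc (0:ℝ) 1) :
    (Measure.pi (fun _ : Fin s => auxNu)).real (auxBox y) = ∏ j, y j := by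
  rw [auxBox_eq, measureReal_def, Measure.pi_pi, ENNReal.toReal_prod]
  refine Finset.prod_congr rfl fun j _ => ?_
  have : auxNu {w : ICO | (w:ℝ) < y j} = volume (Set.Ico 0 (y j)) := by
    rw [auxNu_apply]
    congr 1
    ext w
    simp only [Set.mem_image, Set.mem_setOf_eq, Subtype.exists, Set.mem_Ico]
    constructor
    · rintro ⟨a, ha, h, rfl⟩; exact ⟨ha.1, h⟩
    · rintro ⟨h1, h2⟩; exact ⟨w, ⟨h1, h2.trans_le (hy j).2⟩, h2, rfl⟩
  rw [this]; simp [(hy j).1]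

lemma auxBox_mono {s : ℕ} {y z : Fin s → ℝ} (h : ∀ j, z j ≤ y j) : auxBox z ⊆ auxBox y :=
  fun _ hw j => (hw j).trans_le (h j)

lemma aux_count {N s : ℕ} (hN : 1 ≤ N) (x : Fin N → Fin s → ICO) (t : Fin s → ℝ) :
    localDisc (fun n j => (x n j : ℝ)) t =
      (∑ n, (auxBox t).indicator (1 : (Fin s → ICO) → ℝ) (x n)) / N - ∏ j, t j := by
  classical
  unfold localDisc
  congr 2
  rw [Finset.card_filter]
  push_cast
  refine Finset.sum_congr rfl fun n _ => ?_
  simp [Set.indicator_apply, auxBox]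

lemma aux_exp (s k : ℕ) (hs : 1 ≤ s) :
    (18 * 4 ^ k : ℝ) ^ s * (2 * Real.exp (-(40 * s * (9 / 8) ^ k))) ≤ (1 / 2) ^ (k + 2) := by
  have hb : 1 + (k:ℝ) * (1 / 8) ≤ (9 / 8) ^ k := by
    have := one_add_mul_le_pow (a := (1/8:ℝ)) (by norm_num) k
    norm_num at this ⊢; linarith
  have hs' : (1:ℝ) ≤ s := by exact_mod_cast hs
  have he : Real.exp (-(40 * s * (9 / 8) ^ k)) ≤ (Real.exp (-(5 * (k + 8)))) ^ s := by
    rw [← Real.exp_nat_mul]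
    apply Real.exp_le_exp.2
    nlinarith
  have h8 : Real.exp (-(5 * ((k:ℝ) + 8))) ≤ (1 / 8) ^ (k + 8) := by
    have : Real.exp (-5) ≤ 1 / 8 := by
      have h1 : (8:ℝ) ≤ Real.exp 5 := by
        have h2 : Real.exp 5 = (Real.exp 1) ^ 5 := by rw [← Real.exp_nat_mul]; norm_num
        rw [h2]
        calc (8:ℝ) ≤ 2 ^ 5 := by norm_num
          _ ≤ _ := pow_le_pow_left₀ (by norm_num) (by linarith [Real.exp_one_gt_d9]) _
      rw [Real.exp_neg, one_div]
      exact inv_anti₀ (by norm_num) h1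
    calc Real.exp (-(5 * ((k:ℝ) + 8))) = (Real.exp (-5)) ^ (k + 8) := by
          rw [← Real.exp_nat_mul]; congr 1; push_cast; ring
      _ ≤ _ := pow_le_pow_left₀ (Real.exp_pos _).le this _
  have h2s : (2:ℝ) ≤ 2 ^ s := by
    calc (2:ℝ) = 2 ^ 1 := by norm_num
      _ ≤ _ := pow_le_pow_right₀ (by norm_num) hs
  calc _ ≤ (18 * 4 ^ k : ℝ) ^ s * (2 ^ s * ((1 / 8) ^ (k + 8)) ^ s) := by
        gcongr
        exact he.trans (pow_le_pow_left₀ (Real.exp_pos _).le h8 _)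
    _ = (36 * (1 / 8) ^ 8 * (1 / 2) ^ k) ^ s := by
        rw [← mul_pow, ← mul_pow]
        congr 1
        rw [pow_add, show (1 / 2 : ℝ) ^ k = 4 ^ k * (1 / 8) ^ k by rw [← mul_pow]; norm_num]
        ring
    _ ≤ ((1 / 2) ^ (k + 2)) ^ s := by
        refine pow_le_pow_left₀ (by positivity) ?_ _
        rw [pow_add]
        have : (0:ℝ) < (1 / 2) ^ k := by positivity
        nlinarith
    _ ≤ _ := pow_le_of_le_one (by positivity) (pow_le_one₀ (by norm_num) (by norm_num)) (by omega)

lemma aux_main (N s K : ℕ) (hs : 1 ≤ s) (hN : 1 ≤ N) (ρ : ℝ) (hρ0 : 0 < ρ)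
    (hρ : N * ρ ^ 2 = s) (hK1 : ρ ≤ (1 / 2) ^ K) (hK2 : (1 / 2) ^ K ≤ 2 * ρ) :
    ∃ x : Fin N → Fin s → ICO, ∀ t : Fin s → ℝ, (∀ j, t j ∈ Set.Icc (0:ℝ) 1) →
      |localDisc (fun n j => (x n j : ℝ)) t| ≤ 324 * ρ := by
  classical
  have hN' : (0:ℝ) < N := by exact_mod_cast hN
  choose Γ hΓc hΓ hcov using aux_cover s hs
  have hzero : ∏ j : Fin s, (0 : Fin s → ℝ) j = 0 :=
    Finset.prod_eq_zero (Finset.mem_univ ⟨0, hs⟩) rfl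
  -- predecessors
  have hpred : ∀ k : ℕ, ∀ y : Fin s → ℝ, ∃ z : Fin s → ℝ, (y ∈ Γ k →
      (∀ j, z j ∈ Set.Icc (0:ℝ) 1) ∧ (∀ j, z j ≤ y j) ∧
      ∏ j, y j - ∏ j, z j ≤ 40 * (1 / 2) ^ k ∧ (k = 0 → z = 0) ∧
      (∀ i, k = i + 1 → z ∈ Γ i)) := by
    intro k y
    by_cases hy : y ∈ Γ k
    swap
    · exact ⟨0, fun h => absurd h hy⟩
    have hyI := hΓ k y hy
    cases k with
    | zero =>
      refine ⟨0, fun _ => ⟨by simp, fun j => (hyI j).1, ?_, fun _ => rfl, by simp⟩⟩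
      rw [hzero]
      have : ∏ j, y j ≤ 1 := Finset.prod_le_one (fun j _ => (hyI j).1) (fun j _ => (hyI j).2)
      norm_num; linarith
    | succ k =>
      obtain ⟨u, hu, v, hv, h1, h2, h3⟩ := hcov k y hyI
      refine ⟨u, fun _ => ⟨hΓ k u hu, h1, ?_, by simp, ?_⟩⟩
      · have : ∏ j, y j ≤ ∏ j, v j :=
          Finset.prod_le_prod (fun j _ => (hyI j).1) (fun j _ => h2 j)
        have hp : (0:ℝ) < (1 / 2) ^ k := by positivity
        rw [pow_succ]; linarith
      · intro i hi
        obtain rfl : k = i := by omega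
        exact hu
  choose pred hpred using hpred
  set μ := Measure.pi (fun _ : Fin s => auxNu) with hμ
  let I : Finset (Σ _ : ℕ, (Fin s → ℝ)) := (Finset.range (K + 1)).sigma Γ
  let A : (Σ _ : ℕ, (Fin s → ℝ)) → Set (Fin s → ICO) :=
    fun i => auxBox i.2 \ auxBox (pred i.1 i.2)
  have hI : ∀ i ∈ I, i.1 ≤ K ∧ i.2 ∈ Γ i.1 := by
    intro i hi
    rw [Finset.mem_sigma, Finset.mem_range] at hi
    exact ⟨by omega, hi.2⟩
  have hAvol : ∀ i ∈ I, μ.real (A i) = ∏ j, i.2 j - ∏ j, pred i.1 i.2 j := by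
    intro i hi
    have h := hpred i.1 i.2 (hI i hi).2
    simp only [A]
    rw [measureReal_diff (auxBox_mono h.2.1) (auxBox_meas _), hμ,
      auxBox_vol _ (hΓ _ _ (hI i hi).2), auxBox_vol _ h.1]
  obtain ⟨x, hx⟩ := aux_prob μ N I A (fun i _ => (auxBox_meas _).diff (auxBox_meas _))
    (fun i => 40 * (1 / 2) ^ i.1) (fun i => (3 / 2) ^ i.1 * ρ)
    (fun i => 80 * ((3 / 4) ^ i.1 * ρ))
    (fun i hi => by rw [hAvol i hi]; exact (hpred i.1 i.2 (hI i hi).2).2.2.1)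
    (fun i _ => by positivity)
    (fun i hi => by
      calc (3 / 2 : ℝ) ^ i.1 * ρ ≤ 2 ^ K * (1 / 2) ^ K := by
            refine mul_le_mul ?_ hK1 hρ0.le (by positivity)
            exact (pow_le_pow_left₀ (by norm_num) (by norm_num) _).trans
              (pow_le_pow_right₀ (by norm_num) (hI i hi).1)
        _ = 1 := by rw [← mul_pow]; norm_num)
    (by
      rw [Finset.sum_sigma]
      have hterm : ∀ k ∈ Finset.range (K + 1), (∑ y ∈ Γ k,
          2 * Real.exp (N * (((3 / 2) ^ k * ρ) ^ 2 * (40 * (1 / 2) ^ k)) -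
            (3 / 2) ^ k * ρ * (N * (80 * ((3 / 4) ^ k * ρ))))) ≤ (1 / 2) ^ (k + 2) := by
        intro k _
        have e : (N * (((3 / 2) ^ k * ρ) ^ 2 * (40 * (1 / 2) ^ k)) -
            (3 / 2) ^ k * ρ * (N * (80 * ((3 / 4) ^ k * ρ))) : ℝ) = -(40 * s * (9 / 8) ^ k) := by
          rw [← hρ]
          have e1 : (9 / 8 : ℝ) ^ k = (3 / 2) ^ k * (3 / 4) ^ k := by rw [← mul_pow]; norm_num
          have e2 : (3 / 4 : ℝ) ^ k = (3 / 2) ^ k * (1 / 2) ^ k := by rw [← mul_pow]; norm_num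
          rw [e1, e2]; ring
        rw [e, Finset.sum_const, nsmul_eq_mul]
        refine le_trans ?_ (aux_exp s k hs)
        exact mul_le_mul_of_nonneg_right (hΓc k) (by positivity)
      refine lt_of_le_of_lt (Finset.sum_le_sum hterm) ?_
      have hg : ∀ n : ℕ, ∑ k ∈ Finset.range n, (1 / 2 : ℝ) ^ (k + 2) = 1 / 2 - (1 / 2) ^ (n + 1) := by
        intro n
        induction n with
        | zero => norm_num
        | succ n ih => rw [Finset.sum_range_succ, ih]; ring
      rw [hg]
      have : (0:ℝ) < (1 / 2) ^ (K + 1 + 1) := by positivity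
      linarith)
  refine ⟨x, ?_⟩
  let D : (Fin s → ℝ) → ℝ := fun t => localDisc (fun n j => (x n j : ℝ)) t
  have hD : ∀ t, D t = (∑ n, (auxBox t).indicator (1 : (Fin s → ICO) → ℝ) (x n)) / N - ∏ j, t j :=
    fun t => aux_count hN x t
  have hmono : ∀ a b : Fin s → ℝ, (∀ j, a j ≤ b j) →
      ∑ n, (auxBox a).indicator (1 : (Fin s → ICO) → ℝ) (x n) ≤ ∑ n, (auxBox b).indicator (1 : (Fin s → ICO) → ℝ) (x n) :=
    fun a b hab => Finset.sum_le_sum fun n _ =>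
      Set.indicator_le_indicator_of_subset (auxBox_mono hab) (fun _ => zero_le_one) _
  have hstep : ∀ k ≤ K, ∀ y ∈ Γ k, |D y| ≤ |D (pred k y)| + 80 * ((3 / 4) ^ k * ρ) := by
    intro k hk y hy
    have hi : (⟨k, y⟩ : Σ _ : ℕ, (Fin s → ℝ)) ∈ I := by
      rw [Finset.mem_sigma, Finset.mem_range]; exact ⟨by dsimp; omega, hy⟩
    have h1 := hx _ hi
    have h2 := hAvol _ hi
    have h3 := (hpred k y hy).2.1
    have h4 : ∑ n, ((A ⟨k, y⟩).indicator (1 : (Fin s → ICO) → ℝ) (x n) - μ.real (A ⟨k, y⟩)) =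
        N * (D y - D (pred k y)) := by
      rw [h2, hD, hD, Finset.sum_sub_distrib]
      simp only [A]
      rw [Set.indicator_sdiff (auxBox_mono h3)]
      simp only [Pi.sub_apply, Finset.sum_sub_distrib, Finset.sum_const, Finset.card_univ,
        Fintype.card_fin, nsmul_eq_mul]
      field_simp
      ring
    rw [h4, abs_mul, abs_of_pos hN'] at h1
    have h5 := le_of_mul_le_mul_left h1 hN'
    have h6 := abs_sub_abs_le_abs_sub (D y) (D (pred k y))
    dsimp only at h5
    linarith
  have hchain : ∀ k ≤ K, ∀ y ∈ Γ k, |D y| ≤ 320 * ρ * (1 - (3 / 4) ^ (k + 1)) := by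
    intro k
    induction k with
    | zero =>
      intro hk y hy
      have h1 := hstep 0 hk y hy
      have h2 : D (pred 0 y) = 0 := by
        rw [(hpred 0 y hy).2.2.2.1 rfl, hD, hzero]
        have : auxBox (0 : Fin s → ℝ) = ∅ := by
          ext w
          simp only [auxBox, Set.mem_setOf_eq, Set.mem_empty_iff_false, iff_false]
          intro h
          exact absurd (h ⟨0, hs⟩) (not_lt.2 (w ⟨0, hs⟩).2.1)
        rw [this]; simp
      rw [h2] at h1
      norm_num at h1 ⊢; linarith
    | succ k ih =>
      intro hk y hy
      have h1 := hstep (k + 1) hk y hy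
      have h2 := ih (by omega) _ ((hpred (k + 1) y hy).2.2.2.2 k rfl)
      refine h1.trans ?_
      rw [pow_succ (3 / 4 : ℝ) (k + 1)]
      linarith
  have hchain' : ∀ y ∈ Γ K, |D y| ≤ 320 * ρ := by
    intro y hy
    refine (hchain K le_rfl y hy).trans ?_
    have : (0:ℝ) < (3 / 4) ^ (K + 1) := by positivity
    nlinarith
  intro t ht
  obtain ⟨u, hu, v, hv, h1, h2, h3⟩ := hcov K t ht
  have hdu := abs_le.1 (hchain' u hu)
  have hdv := abs_le.1 (hchain' v hv)
  have c1 := div_le_div_of_nonneg_right (hmono u t h1) hN'.le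
  have c2 := div_le_div_of_nonneg_right (hmono t v h2) hN'.le
  have p1 : ∏ j, u j ≤ ∏ j, t j :=
    Finset.prod_le_prod (fun j _ => (hΓ K u hu j).1) (fun j _ => h1 j)
  have p2 : ∏ j, t j ≤ ∏ j, v j :=
    Finset.prod_le_prod (fun j _ => (ht j).1) (fun j _ => h2 j)
  change |D t| ≤ _
  rw [hD] at hdu hdv
  rw [hD, abs_le]
  constructor <;> linarith [hdu.1, hdu.2, hdv.1, hdv.2]

lemma aux_minDisc (N s : ℕ) (b : ℝ) (x : Fin N → Fin s → ICO)
    (h : ∀ t : Fin s → ℝ, (∀ j, t j ∈ Set.Icc (0:ℝ) 1) →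
      |localDisc (fun n j => (x n j : ℝ)) t| ≤ b) : minDisc N s ≤ b := by
  have h1 : starDisc (fun n j => (x n j : ℝ)) ≤ b := by
    refine csSup_le ⟨_, 0, by simp, rfl⟩ ?_
    rintro d ⟨t, ht, rfl⟩
    exact h t ht
  refine le_trans (csInf_le ⟨0, ?_⟩ ⟨_, fun n j => (x n j).2, rfl⟩) h1
  rintro d ⟨y, _, rfl⟩
  refine Real.sSup_nonneg ?_
  rintro d ⟨t, _, rfl⟩
  exact abs_nonneg _

/-- `disc(N,s) ≤ C √(s/N)` for an absolute constant `C > 0`. -/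
theorem minDisc_le_sqrt_s_div_N :
    ∃ C : ℝ, 0 < C ∧ ∀ N s : ℕ, 1 ≤ N → 1 ≤ s →
      minDisc N s ≤ C * Real.sqrt ((s : ℝ) / N) := by
  refine ⟨324, by norm_num, fun N s hN hs => ?_⟩
  have hN' : (0:ℝ) < N := by exact_mod_cast hN
  have hs' : (0:ℝ) < s := by exact_mod_cast hs
  set ρ := Real.sqrt ((s : ℝ) / N) with hρdef
  have hρ0 : 0 < ρ := Real.sqrt_pos.2 (by positivity)
  have hρ : N * ρ ^ 2 = s := by
    rw [hρdef, Real.sq_sqrt (by positivity)]; field_simp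
  rcases le_total 1 ρ with h1 | h1
  · refine aux_minDisc N s _ (fun _ _ => ⟨0, by simp⟩) fun t ht => ?_
    rw [aux_count hN]
    have p0 : 0 ≤ ∏ j, t j := Finset.prod_nonneg fun j _ => (ht j).1
    have p1 : ∏ j, t j ≤ 1 := Finset.prod_le_one (fun j _ => (ht j).1) (fun j _ => (ht j).2)
    set S := ∑ n : Fin N, (auxBox t).indicator (1 : (Fin s → ICO) → ℝ)
      ((fun _ _ => ⟨0, by simp⟩ : Fin N → Fin s → ICO) n) with hS
    have q0 : 0 ≤ S := Finset.sum_nonneg fun n _ =>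
      Set.indicator_nonneg (fun _ _ => zero_le_one) _
    have q1 : S ≤ N := by
      calc S ≤ ∑ n : Fin N, (1:ℝ) := Finset.sum_le_sum fun n _ =>
            Set.indicator_le_self' (f := (1 : (Fin s → ICO) → ℝ)) (fun _ _ => zero_le_one) _
        _ = N := by simp
    have r0 : 0 ≤ S / N := by positivity
    have r1 : S / N ≤ 1 := (div_le_one hN').2 q1
    rw [abs_le]; constructor <;> linarith
  · obtain ⟨K, hK1, hK2⟩ := exists_nat_pow_near_of_lt_one hρ0 h1 (by norm_num : (0:ℝ) < 1 / 2)
      (by norm_num)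
    obtain ⟨x, hx⟩ := aux_main N s K hs hN ρ hρ0 hρ hK2 (by
      rw [pow_succ] at hK1; linarith)
    exact aux_minDisc N s _ x hx
end

section
/- There exists a constant C > 0 such that for all s ∈ ℕ and all ε ∈ (0,1], the inverse of the star-discrepancy satisfies N(s,ε) ≤ C·s·ε^{−2}. -/
open Finset

lemma trim_exists (s : ℕ) : ∀ (M : ℕ) (n : Fin s → ℕ), M ≤ ∑ j, n j →
    ∃ m : Fin s → ℕ, (∀ j, m j ≤ n j) ∧ ∑ j, m j = M := by
  induction s with
  | zero => intro M n h; exact ⟨n, fun j => le_rfl, by simp at h ⊢; omega⟩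
  | succ s ih =>
    intro M n h
    rw [Fin.sum_univ_succ] at h
    obtain ⟨m, hm, hs⟩ := ih (M - min M (n 0)) (fun j => n j.succ) (by omega)
    refine ⟨Fin.cons (min M (n 0)) m, ?_, ?_⟩
    · intro j
      refine Fin.cases ?_ (fun i => ?_) j
      · simp
      · simpa using hm i
    · rw [Fin.sum_univ_succ]; simp [hs]

lemma count_le (s b : ℕ) (hb : 1 ≤ b) :
    ((((Fintype.piFinset fun _ : Fin s => range (s * b + 1)).filter
      fun m => ∑ j, m j ≤ s * b).card : ℕ) : ℝ) ≤ (3 * ((b:ℝ) + 1)) ^ s := by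
  set S := (Fintype.piFinset fun _ : Fin s => range (s * b + 1)).filter
      fun m => ∑ j, m j ≤ s * b with hS
  have hb0 : (0:ℝ) < b := by exact_mod_cast hb
  set x : ℝ := b / (b + 1) with hx
  have hx0 : 0 < x := by positivity
  have hx1 : x < 1 := by rw [hx, div_lt_one (by positivity)]; linarith
  have h1 : (S.card : ℝ) * x ^ (s * b) ≤ ((b:ℝ) + 1) ^ s := by
    calc (S.card : ℝ) * x ^ (s * b) = ∑ m ∈ S, x ^ (s * b) := by simp
      _ ≤ ∑ m ∈ S, ∏ j, x ^ (m j) := by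
          apply Finset.sum_le_sum
          intro m hm
          rw [Finset.prod_pow_eq_pow_sum]
          exact pow_le_pow_of_le_one hx0.le hx1.le (Finset.mem_filter.1 hm).2
      _ ≤ ∑ m ∈ Fintype.piFinset fun _ : Fin s => range (s * b + 1), ∏ j, x ^ (m j) := by
          apply Finset.sum_le_sum_of_subset_of_nonneg (Finset.filter_subset _ _)
          intros; positivity
      _ = ∏ j : Fin s, ∑ i ∈ range (s * b + 1), x ^ i := by
          rw [Finset.prod_univ_sum]
      _ = (∑ i ∈ range (s * b + 1), x ^ i) ^ s := by simp
      _ ≤ _ := by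
          apply pow_le_pow_left₀ (by positivity)
          have h2 : (∑ i ∈ range (s * b + 1), x ^ i) * (1 - x) ≤ 1 := by
            rw [geom_sum_mul_neg]
            have : 0 ≤ x ^ (s * b + 1) := by positivity
            linarith
          have h3 : 1 - x = 1 / ((b:ℝ) + 1) := by rw [hx]; field_simp; ring
          rw [h3, mul_one_div, div_le_one (by positivity)] at h2
          exact h2
  have h4 : (1:ℝ) ≤ x ^ (s * b) * 3 ^ s := by
    rw [mul_comm s b, pow_mul, ← mul_pow]
    apply one_le_pow₀
    have h5 : x = (1 + 1 / (b:ℝ))⁻¹ := by rw [hx]; field_simp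
    have h6 : (1 + 1 / (b:ℝ)) ^ b ≤ 3 := by
      have := Real.add_one_le_exp (1 / (b:ℝ))
      calc (1 + 1 / (b:ℝ)) ^ b ≤ (Real.exp (1 / (b:ℝ))) ^ b := by
            apply pow_le_pow_left₀ (by positivity); linarith
        _ = Real.exp 1 := by rw [← Real.exp_nat_mul]; congr 1; field_simp
        _ ≤ 3 := by have := Real.exp_one_lt_d9; linarith
    rw [h5, inv_pow, inv_mul_eq_div, one_le_div (by positivity)]
    exact h6
  rw [mul_pow]
  calc (S.card : ℝ) = S.card * 1 := by ring
    _ ≤ S.card * (x ^ (s * b) * 3 ^ s) := by gcongr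
    _ = (S.card * x ^ (s * b)) * 3 ^ s := by ring
    _ ≤ ((b:ℝ) + 1) ^ s * 3 ^ s := by gcongr
    _ = _ := by ring

lemma cover_exists (s : ℕ) (hs : 1 ≤ s) (k : ℕ) : ∃ Γ : Finset (Fin s → ℝ),
    (Γ.card : ℝ) ≤ (10 * 4 ^ k) ^ s ∧ (∀ t ∈ Γ, ∀ j, t j ∈ Set.Icc (0:ℝ) 1) ∧
    ∀ t : Fin s → ℝ, (∀ j, t j ∈ Set.Icc (0:ℝ) 1) → ∃ l ∈ Γ, ∃ u ∈ Γ,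
      (∀ j, l j ≤ t j) ∧ (∀ j, t j ≤ u j) ∧ ∏ j, u j - ∏ j, l j ≤ (1/2) ^ k := by
  classical
  set δ : ℝ := (1/2) ^ k with hδ
  have hδ0 : 0 < δ := by positivity
  have hδ1 : δ ≤ 1 := pow_le_one₀ (by norm_num) (by norm_num)
  have hs0 : (1:ℝ) ≤ s := by exact_mod_cast hs
  set r : ℝ := 1 - δ / s with hr
  have hds : δ / s ≤ 1 := by rw [div_le_one (by positivity)]; linarith
  have hds0 : 0 < δ / s := by positivity
  have hr0 : 0 ≤ r := by linarith
  have hr1 : r ≤ 1 := by linarith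
  set b : ℕ := 4 ^ k + 1 with hb
  set M : ℕ := s * 4 ^ k with hM
  set S := (Fintype.piFinset fun _ : Fin s => range (s * b + 1)).filter
      fun m => ∑ j, m j ≤ s * b with hS
  have hrs : 1 - δ ≤ r ^ s := by
    have := one_add_mul_le_pow (a := -(δ / s)) (by linarith) s
    have h2 : (s:ℝ) * (δ / s) = δ := by field_simp
    rw [hr]
    calc 1 - δ = 1 + s * -(δ / s) := by rw [mul_neg, h2]; ring
      _ ≤ _ := this
      _ = _ := by ring
  have hrM : r ^ M ≤ δ := by
    have h1 : r ≤ Real.exp (-(δ / s)) := by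
      have := Real.add_one_le_exp (-(δ / s)); linarith
    have h2 : r ^ M ≤ Real.exp (-(2:ℝ) ^ k) := by
      calc r ^ M ≤ (Real.exp (-(δ / s))) ^ M := pow_le_pow_left₀ hr0 h1 _
        _ = _ := by
          rw [← Real.exp_nat_mul]; congr 1
          rw [hM, hδ]; push_cast
          have : (4:ℝ) ^ k = 2 ^ k * 2 ^ k := by rw [← mul_pow]; norm_num
          rw [this, one_div, inv_pow]
          field_simp
    have h3 : (2:ℝ) ^ k ≤ Real.exp (2 ^ k) := by
      have := Real.add_one_le_exp ((2:ℝ) ^ k); linarith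
    calc r ^ M ≤ _ := h2
      _ = (Real.exp (2 ^ k))⁻¹ := by rw [Real.exp_neg]
      _ ≤ ((2:ℝ) ^ k)⁻¹ := by gcongr
      _ = δ := by rw [hδ, one_div, inv_pow]
  have memS : ∀ m : Fin s → ℕ, ∑ j, m j ≤ s * b → m ∈ S := by
    intro m hm
    rw [hS, Finset.mem_filter, Fintype.mem_piFinset]
    refine ⟨fun j => ?_, hm⟩
    have := Finset.single_le_sum (f := m) (fun i _ => Nat.zero_le _) (Finset.mem_univ j)
    rw [Finset.mem_range]; omega
  refine ⟨insert 0 (S.image fun m j => r ^ m j), ?_, ?_, ?_⟩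
  · have h1 : ((insert 0 (S.image fun m j => r ^ m j)).card : ℝ) ≤ S.card + 1 := by
      exact_mod_cast (Finset.card_insert_le _ _).trans (Nat.add_le_add_right Finset.card_image_le 1)
    have h2 := count_le s b (by rw [hb]; exact Nat.le_add_left _ _)
    rw [← hS] at h2
    have h4 : (1:ℝ) ≤ 4 ^ k := one_le_pow₀ (by norm_num)
    have h3 : (3 * ((b:ℝ) + 1)) ^ s ≤ (9 * 4 ^ k) ^ s := by
      apply pow_le_pow_left₀ (by positivity)
      rw [hb]; push_cast; linarith
    have h5 : (9 * 4 ^ k : ℝ) ^ s + 1 ≤ (10 * 4 ^ k) ^ s := by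
      have h6 : (9 * 4 ^ k : ℝ) ^ s + 1 ^ s ≤ (9 * 4 ^ k + 1) ^ s :=
        pow_add_pow_le (by positivity) (by norm_num) (by omega)
      rw [one_pow] at h6
      refine h6.trans (pow_le_pow_left₀ (by positivity) ?_ _)
      linarith
    linarith
  · intro t ht j
    rw [Finset.mem_insert, Finset.mem_image] at ht
    rcases ht with rfl | ⟨m, _, rfl⟩
    · simp
    · exact ⟨pow_nonneg hr0 _, pow_le_one₀ hr0 hr1⟩
  · intro t ht
    set n : Fin s → ℕ := fun j => Nat.findGreatest (fun n => t j ≤ r ^ n) M with hn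
    have hn1 : ∀ j, t j ≤ r ^ n j := fun j =>
      Nat.findGreatest_spec (P := fun n => t j ≤ r ^ n) (Nat.zero_le M) (by simpa using (ht j).2)
    by_cases hc : M ≤ ∑ j, n j
    · obtain ⟨m, hm, hms⟩ := trim_exists s M n hc
      refine ⟨0, by simp, fun j => r ^ m j, ?_, fun j => (ht j).1, fun j => ?_, ?_⟩
      · apply Finset.mem_insert_of_mem
        apply Finset.mem_image_of_mem
        apply memS
        rw [hms, hM, hb]; exact Nat.mul_le_mul_left _ (Nat.le_succ _)
      · exact (hn1 j).trans (pow_le_pow_of_le_one hr0 hr1 (hm j))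
      · rw [Finset.prod_pow_eq_pow_sum, hms]
        have : ∏ j : Fin s, (0 : Fin s → ℝ) j = 0 := by
          apply Finset.prod_eq_zero (Finset.mem_univ (⟨0, hs⟩ : Fin s)); rfl
        rw [this]; linarith
    · push Not at hc
      have hlt : ∀ j, n j < M := fun j =>
        (Finset.single_le_sum (f := n) (fun i _ => Nat.zero_le _) (Finset.mem_univ j)).trans_lt hc
      refine ⟨fun j => r ^ (n j + 1), ?_, fun j => r ^ n j, ?_, fun j => ?_, hn1, ?_⟩
      · apply Finset.mem_insert_of_mem
        apply Finset.mem_image_of_mem (f := fun (m : Fin s → ℕ) j => r ^ m j) (a := fun j => n j + 1)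
        apply memS
        rw [Finset.sum_add_distrib]
        simp
        rw [hb, mul_add]; omega
      · apply Finset.mem_insert_of_mem
        apply Finset.mem_image_of_mem
        apply memS
        rw [hb, mul_add]; omega
      · have := Nat.findGreatest_is_greatest (P := fun n => t j ≤ r ^ n) (n := M)
          (k := n j + 1) (Nat.lt_succ_self _) (hlt j)
        exact (not_le.1 this).le
      · rw [Finset.prod_pow_eq_pow_sum, Finset.prod_pow_eq_pow_sum, Finset.sum_add_distrib]
        simp only [Finset.sum_const, Finset.card_univ, Fintype.card_fin, smul_eq_mul, mul_one]
        rw [pow_add]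
        have h1 : r ^ (∑ j, n j) ≤ 1 := pow_le_one₀ hr0 hr1
        have h2 : 0 ≤ r ^ (∑ j, n j) := pow_nonneg hr0 _
        nlinarith

open MeasureTheory in
lemma seq_exists {X ι : Type*} [MeasurableSpace X] (μ : Measure X) (Q : Set X) (hQ : μ Q = 1)
    (T : Finset ι) (f : ι → X → ℝ) (c : ι → ℝ)
    (hint : ∀ i ∈ T, IntegrableOn (fun x => Real.exp (f i x)) Q μ)
    (hle : ∀ i ∈ T, ∫ x in Q, Real.exp (f i x) ∂μ ≤ Real.exp (c i)) (w : ι → ℝ)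
    (hw : ∀ i, 0 ≤ w i) (N : ℕ) :
    ∃ x : Fin N → X, (∀ n, x n ∈ Q) ∧
      ∑ i ∈ T, w i * Real.exp (∑ n, f i (x n)) ≤ ∑ i ∈ T, w i * Real.exp (N * c i) := by
  induction N generalizing w with
  | zero => exact ⟨fun n => n.elim0, fun n => n.elim0, by simp⟩
  | succ N ih =>
    have hI : IntegrableOn (fun x => ∑ i ∈ T, w i * Real.exp (N * c i) * Real.exp (f i x)) Q μ :=
      integrable_finsetSum _ fun i hi => (hint i hi).const_mul _
    obtain ⟨y, hy, hle2⟩ := exists_le_setAverage (by rw [hQ]; simp) (by rw [hQ]; simp) hI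
    have hr : μ.real Q = 1 := by simp [Measure.real, hQ]
    rw [setAverage_eq, hr, inv_one, one_smul,
      integral_finsetSum _ (fun i hi => (hint i hi).const_mul _)] at hle2
    obtain ⟨x, hx, hx2⟩ := ih (fun i => w i * Real.exp (f i y))
      (fun i => mul_nonneg (hw i) (Real.exp_nonneg _))
    refine ⟨Fin.cons y x, ?_, ?_⟩
    · intro n
      refine Fin.cases ?_ (fun i => ?_) n
      · simpa using hy
      · simpa using hx i
    · calc _ = ∑ i ∈ T, w i * Real.exp (f i y) * Real.exp (∑ n, f i (x n)) := by
            apply Finset.sum_congr rfl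
            intro i _
            rw [Fin.sum_univ_succ, Real.exp_add]; simp [mul_assoc]
        _ ≤ _ := hx2
        _ = ∑ i ∈ T, w i * Real.exp (N * c i) * Real.exp (f i y) := by
            apply Finset.sum_congr rfl
            intro i _; ring
        _ ≤ _ := hle2
        _ ≤ _ := by
            apply Finset.sum_le_sum
            intro i hi
            rw [integral_const_mul]
            calc _ ≤ w i * Real.exp (N * c i) * Real.exp (c i) :=
                  mul_le_mul_of_nonneg_left (hle i hi) (mul_nonneg (hw i) (Real.exp_nonneg _))
              _ = _ := by
                  rw [mul_assoc, ← Real.exp_add]; push_cast; ring_nf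

/-- single point deviation -/
noncomputable def ptDev {s : ℕ} (t : Fin s → ℝ) (x : Fin s → ℝ) : ℝ :=
  (if ∀ j, x j < t j then 1 else 0) - ∏ j, t j

lemma sum_ptDev {s N : ℕ} (hN : 1 ≤ N) (t : Fin s → ℝ) (x : Fin N → Fin s → ℝ) :
    ∑ n, ptDev t (x n) = N * localDisc x t := by
  have : (0:ℝ) < N := by exact_mod_cast hN
  simp only [ptDev, localDisc, Finset.sum_sub_distrib, Finset.sum_boole]
  simp
  field_simp

open MeasureTheory in
lemma mgf_le {s : ℕ} (t l : Fin s → ℝ) (ht : ∀ j, t j ∈ Set.Icc (0:ℝ) 1)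
    (hl : ∀ j, l j ∈ Set.Icc (0:ℝ) 1) (hlt : ∀ j, l j ≤ t j) (a v : ℝ) (ha : |a| ≤ 1)
    (hv : ∏ j, t j - ∏ j, l j ≤ v) :
    IntegrableOn (fun x => Real.exp (a * (ptDev t x - ptDev l x)))
      (Set.univ.pi fun _ : Fin s => Set.Ico (0:ℝ) 1) volume ∧
    ∫ x in (Set.univ.pi fun _ : Fin s => Set.Ico (0:ℝ) 1),
      Real.exp (a * (ptDev t x - ptDev l x)) ≤ Real.exp (a ^ 2 * v) := by
  set Q : Set (Fin s → ℝ) := Set.univ.pi fun _ : Fin s => Set.Ico (0:ℝ) 1 with hQ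
  have hQm : MeasurableSet Q := MeasurableSet.univ_pi fun _ => measurableSet_Ico
  have hQv : volume Q = 1 := by rw [hQ, Real.volume_pi_Ico]; simp
  have hQr : volume.real Q = 1 := by simp [Measure.real, hQv]
  set B : (Fin s → ℝ) → Set (Fin s → ℝ) := fun u => Set.univ.pi fun j => Set.Ico (0:ℝ) (u j) with hB
  have hBm : ∀ u, MeasurableSet (B u) := fun u => MeasurableSet.univ_pi fun _ => measurableSet_Ico
  have hBv : ∀ u : Fin s → ℝ, (∀ j, u j ∈ Set.Icc (0:ℝ) 1) → volume.real (B u) = ∏ j, u j := by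
    intro u hu
    rw [Measure.real, hB, Real.volume_pi_Ico, ENNReal.toReal_prod]
    apply Finset.prod_congr rfl
    intro j _
    rw [sub_zero, ENNReal.toReal_ofReal (hu j).1]
  have hBQ : ∀ u : Fin s → ℝ, (∀ j, u j ∈ Set.Icc (0:ℝ) 1) → B u ⊆ Q := by
    intro u hu x hx j hj
    exact ⟨(hx j hj).1, (hx j hj).2.trans_le (hu j).2⟩
  have hBB : B l ⊆ B t := fun x hx j hj => ⟨(hx j hj).1, (hx j hj).2.trans_le (hlt j)⟩
  set p := ∏ j, t j - ∏ j, l j with hp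
  have hfin : volume (B t) ≠ ⊤ := ne_top_of_le_ne_top (by rw [hQv]; simp) (measure_mono (hBQ t ht))
  have hAv : volume.real (B t \ B l) = p := by
    rw [measureReal_sdiff hBB (hBm l) hfin, hBv t ht, hBv l hl]
  have hp0 : 0 ≤ p := hAv ▸ measureReal_nonneg
  set A := B t \ B l with hA
  have hAm : MeasurableSet A := (hBm t).diff (hBm l)
  have hAQ : A ⊆ Q := Set.sdiff_subset.trans (hBQ t ht)
  have key : Set.EqOn (fun x => Real.exp (a * (ptDev t x - ptDev l x)))
      (fun x => Real.exp (-a * p) * (1 + A.indicator (fun _ => Real.exp a - 1) x)) Q := by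
    intro x hx
    have hmem : ∀ u : Fin s → ℝ, x ∈ B u ↔ ∀ j, x j < u j := fun u =>
      ⟨fun h j => (h j trivial).2, fun h j _ => ⟨(hx j trivial).1, h j⟩⟩
    simp only [ptDev]
    by_cases h1 : x ∈ B l
    · have h2 := hBB h1
      have h3 : x ∉ A := fun h => h.2 h1
      rw [if_pos ((hmem t).1 h2), if_pos ((hmem l).1 h1), Set.indicator_of_notMem h3, hp]
      rw [add_zero, mul_one]; ring_nf
    · by_cases h2 : x ∈ B t
      · have h3 : x ∈ A := ⟨h2, h1⟩
        rw [if_pos ((hmem t).1 h2), if_neg (fun h => h1 ((hmem l).2 h)), Set.indicator_of_mem h3, hp,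
          add_sub_cancel, ← Real.exp_add]
        ring_nf
      · have h3 : x ∉ A := fun h => h2 h.1
        rw [if_neg (fun h => h2 ((hmem t).2 h)), if_neg (fun h => h1 ((hmem l).2 h)),
          Set.indicator_of_notMem h3, hp]
        rw [add_zero, mul_one]; ring_nf
  have hQt : volume Q ≠ ⊤ := by rw [hQv]; simp
  have i1 : IntegrableOn (fun _ : Fin s → ℝ => (1:ℝ)) Q volume := integrableOn_const hQt
  have i2 : IntegrableOn (A.indicator (fun _ => Real.exp a - 1)) Q volume :=
    IntegrableOn.indicator (integrableOn_const hQt) hAm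
  have i3 : IntegrableOn (fun x => Real.exp (-a * p) *
      (1 + A.indicator (fun _ => Real.exp a - 1) x)) Q volume := (i1.add i2).const_mul _
  refine ⟨i3.congr_fun key.symm hQm, ?_⟩
  rw [setIntegral_congr_fun hQm key, integral_const_mul, integral_add i1 i2,
    setIntegral_indicator hAm, Set.inter_eq_self_of_subset_right hAQ]
  simp only [setIntegral_const, hQr, hAv, smul_eq_mul, one_mul]
  have h1 := Real.add_one_le_exp (p * (Real.exp a - 1))
  have h2 := (abs_le.1 (Real.abs_exp_sub_one_sub_id_le ha)).2
  calc _ ≤ Real.exp (-a * p) * Real.exp (p * (Real.exp a - 1)) := by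
        apply mul_le_mul_of_nonneg_left _ (Real.exp_nonneg _); linarith
    _ = Real.exp (p * (Real.exp a - 1 - a)) := by rw [← Real.exp_add]; ring_nf
    _ ≤ Real.exp (a ^ 2 * v) := by
        apply Real.exp_le_exp.2
        calc _ ≤ p * a ^ 2 := mul_le_mul_of_nonneg_left h2 hp0
          _ ≤ v * a ^ 2 := mul_le_mul_of_nonneg_right hv (sq_nonneg a)
          _ = _ := by ring

lemma sumA_le (n : ℕ) :
    ∑ k ∈ range n, (180 * (3/4 : ℝ) ^ k + 80 * ((k:ℝ) + 1) * (2/3) ^ k) ≤ 1440 := by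
  have h : ∑ k ∈ range n, (180 * (3/4 : ℝ) ^ k + 80 * ((k:ℝ) + 1) * (2/3) ^ k)
      = 1440 - 720 * (3/4) ^ n - 80 * (3 * n + 9) * (2/3) ^ n := by
    induction n with
    | zero => norm_num
    | succ n ih => rw [Finset.sum_range_succ, ih]; push_cast; ring
  rw [h]
  have h1 : (0:ℝ) ≤ 720 * (3/4) ^ n := by positivity
  have h2 : (0:ℝ) ≤ 80 * (3 * n + 9) * (2/3) ^ n := by positivity
  linarith

lemma card_bound (s : ℕ) (hs : 1 ≤ s) (k : ℕ) :
    (10 * 4 ^ k : ℝ) ^ s * (2 * Real.exp (-(5 * s * (k + 1)))) ≤ (1/2) ^ (k + 1) := by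
  have h1 : (10 * 4 ^ k : ℝ) ^ s * (4 * 2 ^ k) ≤ Real.exp (5 * s * (k + 1)) := by
    have h2 : (1:ℝ) ≤ 2 ^ k := one_le_pow₀ (by norm_num)
    have he : (40:ℝ) ≤ Real.exp 5 := by
      have h := Real.exp_one_gt_d9
      have : Real.exp 5 = Real.exp 1 ^ 5 := by rw [← Real.exp_nat_mul]; norm_num
      rw [this]
      calc (40:ℝ) ≤ 2.7 ^ 5 := by norm_num
        _ ≤ _ := by apply pow_le_pow_left₀ (by norm_num); linarith
    calc (10 * 4 ^ k : ℝ) ^ s * (4 * 2 ^ k) ≤ (10 * 4 ^ k : ℝ) ^ s * (4 * 2 ^ k) ^ s := by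
          apply mul_le_mul_of_nonneg_left _ (by positivity)
          exact le_self_pow₀ (by linarith) (by omega)
      _ = (40 * 8 ^ k) ^ s := by
          rw [← mul_pow]; congr 1
          have : (8:ℝ) ^ k = 4 ^ k * 2 ^ k := by rw [← mul_pow]; norm_num
          rw [this]; ring
      _ ≤ (Real.exp 5 ^ (k + 1)) ^ s := by
          apply pow_le_pow_left₀ (by positivity)
          calc (40 * 8 ^ k : ℝ) ≤ 40 * 40 ^ k := by gcongr; norm_num
            _ = 40 ^ (k + 1) := by ring
            _ ≤ _ := by gcongr
      _ = _ := by
          rw [← pow_mul, ← Real.exp_nat_mul]; push_cast; ring_nf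
  rw [Real.exp_neg, one_div, inv_pow, ← mul_assoc, ← div_eq_mul_inv,
    div_le_iff₀ (Real.exp_pos _), inv_mul_eq_div, le_div_iff₀ (by positivity)]
  calc _ = (10 * 4 ^ k : ℝ) ^ s * (4 * 2 ^ k) := by ring
    _ ≤ _ := h1

lemma half_sum_le (n : ℕ) : ∑ k ∈ range n, (1/2 : ℝ) ^ (k + 1) ≤ 1 := by
  have h : ∑ k ∈ range n, (1/2 : ℝ) ^ (k + 1) = 1 - (1/2) ^ n := by
    induction n with
    | zero => norm_num
    | succ n ih => rw [Finset.sum_range_succ, ih]; ring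
  rw [h]
  have : (0:ℝ) ≤ (1/2) ^ n := by positivity
  linarith

lemma points_exist (s : ℕ) (hs : 1 ≤ s) (K : ℕ) :
    ∃ x : Fin (1440 * s * 4 ^ K) → Fin s → ℝ, (∀ n j, x n j ∈ Set.Ico (0:ℝ) 1) ∧
      ∀ t : Fin s → ℝ, (∀ j, t j ∈ Set.Icc (0:ℝ) 1) → |localDisc x t| ≤ 2 * (1/2) ^ K := by
  classical
  set N := 1440 * s * 4 ^ K with hNdef
  have hN : 1 ≤ N := Nat.mul_pos (Nat.mul_pos (by norm_num) hs) (by positivity)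
  have hN0 : (0:ℝ) < N := by exact_mod_cast hN
  have hs0 : (1:ℝ) ≤ s := by exact_mod_cast hs
  choose Γ hcard hcube hcov using cover_exists s hs
  have hz : ∏ j : Fin s, (0 : Fin s → ℝ) j = 0 := by
    apply Finset.prod_eq_zero (Finset.mem_univ (⟨0, hs⟩ : Fin s)); rfl
  have hpred : ∀ (k : ℕ) (t : Fin s → ℝ), ∃ l : Fin s → ℝ, (∀ j, t j ∈ Set.Icc (0:ℝ) 1) →
      (∀ j, l j ∈ Set.Icc (0:ℝ) 1) ∧ (∀ j, l j ≤ t j) ∧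
      ∏ j, t j - ∏ j, l j ≤ 2 * (1/2) ^ k ∧ (k = 0 → l = 0) ∧ (∀ k', k = k' + 1 → l ∈ Γ k') := by
    intro k t
    by_cases ht : ∀ j, t j ∈ Set.Icc (0:ℝ) 1
    swap
    · exact ⟨0, fun h => absurd h ht⟩
    cases k with
    | zero =>
      refine ⟨0, fun _ => ⟨by simp, fun j => (ht j).1, ?_, fun _ => rfl, by simp⟩⟩
      rw [hz]
      have := Finset.prod_le_one (s := univ) (fun j _ => (ht j).1) (fun j _ => (ht j).2)
      norm_num; linarith
    | succ k =>
      obtain ⟨l, hl, u, hu, hlt, htu, hv⟩ := hcov k t ht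
      refine ⟨l, fun _ => ⟨hcube k l hl, hlt, ?_, by simp, ?_⟩⟩
      · have := Finset.prod_le_prod (s := univ) (fun j _ => (ht j).1) (fun j _ => htu j)
        calc _ ≤ (1/2 : ℝ) ^ k := by linarith
          _ = _ := by ring
      · intro k' h
        obtain rfl : k = k' := by omega
        exact hl
  choose pred hpred using hpred
  set lam : ℕ → ℝ := fun k => (3/2) ^ k / (16 * 2 ^ K) with hlam
  have hlam0 : ∀ k, 0 < lam k := fun k => by simp only [hlam]; positivity
  have hlam1 : ∀ k ≤ K, lam k ≤ 1 := by
    intro k hk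
    simp only [hlam]
    rw [div_le_one (by positivity)]
    calc (3/2 : ℝ) ^ k ≤ 2 ^ k := by gcongr; norm_num
      _ ≤ 2 ^ K := by gcongr; norm_num
      _ ≤ _ := by have : (0:ℝ) < 2 ^ K := by positivity
                  linarith
  set a : ℕ → ℝ := fun k =>
    s * 2 ^ K * (180 * (3/4 : ℝ) ^ k + 80 * ((k:ℝ) + 1) * (2/3) ^ k) with ha
  have hexp : ∀ k, -(lam k * a k) + N * (lam k ^ 2 * (2 * (1/2) ^ k)) = -(5 * s * (k + 1)) := by
    intro k
    simp only [hlam, ha]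
    rw [hNdef]; push_cast
    have e1 : (4:ℝ) ^ K = 2 ^ K * 2 ^ K := by rw [← mul_pow]; norm_num
    have e2 : (3/4 : ℝ) ^ k = (3/2) ^ k * (1/2) ^ k := by rw [← mul_pow]; norm_num
    have e3 : (3/2 : ℝ) ^ k * (2/3) ^ k = 1 := by rw [← mul_pow]; norm_num
    have hP : (2:ℝ) ^ K ≠ 0 := by positivity
    rw [e1, e2]
    generalize (2:ℝ) ^ K = P at *
    generalize (3/2:ℝ) ^ k = u at *
    generalize (2/3:ℝ) ^ k = w at *
    generalize (1/2:ℝ) ^ k = z at *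
    field_simp
    linear_combination (-1280 * ((k:ℝ) + 1)) * e3
  set T : Finset ((Σ _ : ℕ, (Fin s → ℝ)) × ℝ) := ((range (K + 1)).sigma Γ) ×ˢ {1, -1} with hT
  have hTm : ∀ i ∈ T, i.1.1 ≤ K ∧ i.1.2 ∈ Γ i.1.1 ∧ |i.2| = 1 := by
    intro i hi
    rw [hT, Finset.mem_product, Finset.mem_sigma, Finset.mem_range] at hi
    refine ⟨by omega, hi.1.2, ?_⟩
    have := hi.2
    simp only [Finset.mem_insert, Finset.mem_singleton] at this
    rcases this with h | h <;> simp [h]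
  set Q : Set (Fin s → ℝ) := Set.univ.pi fun _ : Fin s => Set.Ico (0:ℝ) 1 with hQ
  have hQv : MeasureTheory.volume Q = 1 := by rw [hQ, Real.volume_pi_Ico]; simp
  have hm : ∀ i ∈ T, _ := fun i hi =>
    have h := hpred i.1.1 i.1.2 (hcube _ _ (hTm i hi).2.1)
    mgf_le i.1.2 (pred i.1.1 i.1.2) (hcube _ _ (hTm i hi).2.1) h.1 h.2.1
      (i.2 * lam i.1.1) (2 * (1/2) ^ i.1.1)
      (by rw [abs_mul, (hTm i hi).2.2, one_mul, abs_of_pos (hlam0 _)]; exact hlam1 _ (hTm i hi).1)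
      h.2.2.1
  obtain ⟨x, hxQ, hx⟩ := seq_exists MeasureTheory.volume Q hQv T
    (fun i y => i.2 * lam i.1.1 * (ptDev i.1.2 y - ptDev (pred i.1.1 i.1.2) y))
    (fun i => (i.2 * lam i.1.1) ^ 2 * (2 * (1/2) ^ i.1.1))
    (fun i hi => (hm i hi).1) (fun i hi => (hm i hi).2)
    (fun i => Real.exp (-(lam i.1.1 * a i.1.1))) (fun i => Real.exp_nonneg _) N
  have hx1 : ∑ i ∈ T, Real.exp (-(lam i.1.1 * a i.1.1)) *
      Real.exp (N * ((i.2 * lam i.1.1) ^ 2 * (2 * (1/2) ^ i.1.1))) ≤ 1 := by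
    calc _ = ∑ i ∈ T, Real.exp (-(5 * s * ((i.1.1:ℝ) + 1))) := by
          apply Finset.sum_congr rfl
          intro i hi
          rw [← Real.exp_add, ← hexp, mul_pow, ← sq_abs i.2, (hTm i hi).2.2, one_pow, one_mul]
      _ = ∑ k ∈ range (K + 1), (Γ k).card * (2 * Real.exp (-(5 * s * ((k:ℝ) + 1)))) := by
          rw [hT, Finset.sum_product, Finset.sum_sigma]
          apply Finset.sum_congr rfl
          intro k _
          have : ((1:ℝ)) ≠ -1 := by norm_num
          simp [Finset.card_pair this]
      _ ≤ ∑ k ∈ range (K + 1), (1/2 : ℝ) ^ (k + 1) := by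
          apply Finset.sum_le_sum
          intro k _
          refine le_trans ?_ (card_bound s hs k)
          exact mul_le_mul_of_nonneg_right (hcard k) (by positivity)
      _ ≤ 1 := half_sum_le _
  have hone : ∀ i ∈ T, i.2 * (N * localDisc x i.1.2 - N * localDisc x (pred i.1.1 i.1.2)) ≤ a i.1.1 := by
    intro i hi
    have h1 := (Finset.single_le_sum (f := fun i : (Σ _ : ℕ, (Fin s → ℝ)) × ℝ =>
      Real.exp (-(lam i.1.1 * a i.1.1)) * Real.exp (∑ n,
      i.2 * lam i.1.1 * (ptDev i.1.2 (x n) - ptDev (pred i.1.1 i.1.2) (x n))))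
      (fun i _ => by positivity) hi).trans (hx.trans hx1)
    rw [← Real.exp_add, Real.exp_le_one_iff, ← Finset.mul_sum, Finset.sum_sub_distrib,
      sum_ptDev hN, sum_ptDev hN] at h1
    have h2 := hlam0 i.1.1
    by_contra hcon
    push Not at hcon
    nlinarith [mul_lt_mul_of_pos_left hcon h2]
  have hstep : ∀ k ≤ K, ∀ t ∈ Γ k, |N * localDisc x t - N * localDisc x (pred k t)| ≤ a k := by
    intro k hk t ht
    have hmem : ∀ σ : ℝ, σ = 1 ∨ σ = -1 → ((⟨k, t⟩, σ) : (Σ _ : ℕ, (Fin s → ℝ)) × ℝ) ∈ T := by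
      intro σ hσ
      rw [hT, Finset.mem_product, Finset.mem_sigma, Finset.mem_range]
      exact ⟨⟨by simp only; omega, ht⟩, by simpa using hσ⟩
    have h1 := hone _ (hmem 1 (Or.inl rfl))
    have h2 := hone _ (hmem (-1) (Or.inr rfl))
    simp only at h1 h2
    rw [abs_le]; constructor <;> linarith
  have hx0 : localDisc x 0 = 0 := by
    have : (univ.filter fun n => ∀ j, x n j < (0 : Fin s → ℝ) j) = ∅ := by
      apply Finset.filter_eq_empty_iff.2
      intro n _ h
      exact absurd (h ⟨0, hs⟩) (not_lt.2 (hxQ n ⟨0, hs⟩ trivial).1)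
    rw [localDisc, this, hz]; simp
  have hchain : ∀ k ≤ K, ∀ t ∈ Γ k, |N * localDisc x t| ≤ ∑ i ∈ range (k + 1), a i := by
    intro k
    induction k with
    | zero =>
      intro hk t ht
      have h := hstep 0 hk t ht
      rw [(hpred 0 t (hcube _ _ ht)).2.2.2.1 rfl, hx0] at h
      simpa using h
    | succ k ih =>
      intro hk t ht
      have h := hstep (k + 1) hk t ht
      have h2 := ih (by omega) _ ((hpred (k + 1) t (hcube _ _ ht)).2.2.2.2 k rfl)
      rw [Finset.sum_range_succ]
      rw [abs_le] at *
      constructor <;> linarith [h.1, h.2, h2.1, h2.2]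
  have hfinal : ∀ t ∈ Γ K, |localDisc x t| ≤ (1/2) ^ K := by
    intro t ht
    have h := hchain K le_rfl t ht
    have h2 : ∑ i ∈ range (K + 1), a i ≤ N * (1/2) ^ K := by
      simp only [ha]
      rw [← Finset.mul_sum]
      calc _ ≤ (s:ℝ) * 2 ^ K * 1440 := mul_le_mul_of_nonneg_left (sumA_le _) (by positivity)
        _ = _ := by
          rw [hNdef]; push_cast
          have e1 : (4:ℝ) ^ K * (1/2) ^ K = 2 ^ K := by rw [← mul_pow]; norm_num
          linear_combination (-1440 * (s:ℝ)) * e1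
    rw [abs_mul, abs_of_pos hN0] at h
    exact le_of_mul_le_mul_left (h.trans h2) hN0
  refine ⟨x, fun n j => hxQ n j trivial, ?_⟩
  intro t ht
  obtain ⟨l, hl, u, hu, hlt, htu, hv⟩ := hcov K t ht
  have hL := abs_le.1 (hfinal l hl)
  have hU := abs_le.1 (hfinal u hu)
  have hp1 := Finset.prod_le_prod (s := univ) (fun j _ => (ht j).1) (fun j _ => htu j)
  have hp2 := Finset.prod_le_prod (s := univ) (fun j _ => (hcube K l hl j).1) (fun j _ => hlt j)
  have hmono : ∀ p q : Fin s → ℝ, (∀ j, p j ≤ q j) →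
      ((univ.filter fun n => ∀ j, x n j < p j).card : ℝ) / N ≤
      ((univ.filter fun n => ∀ j, x n j < q j).card : ℝ) / N := by
    intro p q hpq
    apply div_le_div_of_nonneg_right _ hN0.le
    have hsub : (univ.filter fun n => ∀ j, x n j < p j) ⊆ (univ.filter fun n => ∀ j, x n j < q j) := by
      intro n hn
      rw [Finset.mem_filter] at hn ⊢
      exact ⟨hn.1, fun j => (hn.2 j).trans_le (hpq j)⟩
    exact_mod_cast Finset.card_le_card hsub
  have m1 := hmono l t hlt
  have m2 := hmono t u htu
  simp only [localDisc] at hL hU ⊢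
  rw [abs_le]
  constructor <;> linarith [hL.1, hL.2, hU.1, hU.2]

/-- `N(s,ε) ≤ C s ε⁻²` for an absolute constant `C > 0`. -/
theorem invDisc_le :
    ∃ C : ℝ, 0 < C ∧ ∀ s : ℕ, 1 ≤ s → ∀ ε : ℝ, ε ∈ Set.Ioc (0:ℝ) 1 →
      (invDisc s ε : ℝ) ≤ C * s * ε⁻¹ ^ 2 := by
  refine ⟨1440 * 16, by norm_num, ?_⟩
  intro s hs ε hε
  obtain ⟨hε0, hε1⟩ := hε
  obtain ⟨K, hK1, hK2⟩ : ∃ K : ℕ, 2 * (1/2 : ℝ) ^ K ≤ ε ∧ (2:ℝ) ^ K ≤ 4 * ε⁻¹ := by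
    obtain ⟨n, hn1, hn2⟩ := exists_nat_pow_near (x := ε⁻¹) (y := (2:ℝ))
      ((one_le_inv₀ hε0).2 hε1) (by norm_num)
    refine ⟨n + 2, ?_, ?_⟩
    · have h : (2 * (1/2 : ℝ) ^ (n + 2)) = (2 ^ (n + 1))⁻¹ := by
        rw [one_div, inv_pow, pow_succ _ (n+1)]; field_simp
      rw [h]
      exact inv_le_of_inv_le₀ hε0 hn2.le
    · rw [pow_add]; linarith
  obtain ⟨x, hxQ, hx⟩ := points_exist s hs K
  have hmem : 1440 * s * 4 ^ K ∈ {N : ℕ | 1 ≤ N ∧ minDisc N s ≤ ε} := by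
    refine ⟨Nat.mul_pos (Nat.mul_pos (by norm_num) hs) (by positivity), ?_⟩
    have h1 : starDisc x ≤ ε := by
      apply Real.sSup_le _ hε0.le
      rintro d ⟨t, ht, rfl⟩
      exact (hx t ht).trans hK1
    refine le_trans (csInf_le ⟨0, ?_⟩ ⟨x, hxQ, rfl⟩) h1
    rintro d ⟨y, _, rfl⟩
    apply Real.sSup_nonneg
    rintro d ⟨t, _, rfl⟩
    exact abs_nonneg _
  have h2 : invDisc s ε ≤ 1440 * s * 4 ^ K := Nat.sInf_le hmem
  calc (invDisc s ε : ℝ) ≤ ((1440 * s * 4 ^ K : ℕ) : ℝ) := by exact_mod_cast h2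
    _ = 1440 * s * ((2:ℝ) ^ K) ^ 2 := by
        push_cast; rw [← pow_mul, mul_comm K 2, pow_mul]; norm_num
    _ ≤ 1440 * s * (4 * ε⁻¹) ^ 2 := by gcongr
    _ = _ := by ring
end

section
/- There exists a constant C > 0 (independent of N and s) such that for all s ∈ ℕ and all N ∈ ℕ with N ≥ 2 one has disc(N,s) ≤ C·√(s/N)·√(log s + log N); equivalently, for every such N and s there exists an N-element point set P in [0,1)^s with D*(P) ≤ C·√(s/N)·√(log s + log N). -/
open Finset

lemma exp_mul_le_aux (l y : ℝ) (hy : |y| ≤ 1) :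
    Real.exp (l * y) ≤ Real.cosh l + y * Real.sinh l := by
  obtain ⟨h1, h2⟩ := abs_le.1 hy
  have h := convexOn_exp.2 (Set.mem_univ l) (Set.mem_univ (-l))
    (show 0 ≤ (1 + y) / 2 by linarith) (show 0 ≤ (1 - y) / 2 by linarith) (by ring)
  simp only [smul_eq_mul] at h
  rw [Real.cosh_eq, Real.sinh_eq]
  have e : (1 + y) / 2 * l + (1 - y) / 2 * -l = l * y := by ring
  rw [e] at h
  linarith

lemma exists_good {Ω T : Type*} [Fintype Ω] [Fintype T] [Nonempty Ω] (N : ℕ)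
    (f : T → Ω → ℝ) (hf : ∀ t w, |f t w| ≤ 1) (h0 : ∀ t, ∑ w, f t w = 0) (ε : ℝ) (hε : 0 ≤ ε)
    (hT : (Fintype.card T : ℝ) < Real.exp (N * ε ^ 2 / 2)) :
    ∃ x : Fin N → Ω, ∀ t, ∑ n, f t (x n) < N * ε := by
  classical
  by_contra hcon
  push Not at hcon
  have hup : ∀ t, ∑ x : Fin N → Ω, Real.exp (ε * ∑ n, f t (x n)) ≤
      (Fintype.card Ω : ℝ) ^ N * Real.exp (N * ε ^ 2 / 2) := by
    intro t
    have e1 : ∑ x : Fin N → Ω, Real.exp (ε * ∑ n, f t (x n)) =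
        (∑ w, Real.exp (ε * f t w)) ^ N := by
      rw [Fintype.sum_pow]
      refine Finset.sum_congr rfl fun x _ => ?_
      rw [Finset.mul_sum, Real.exp_sum]
    have e2 : ∑ w, Real.exp (ε * f t w) ≤ Fintype.card Ω * Real.exp (ε ^ 2 / 2) := by
      calc ∑ w, Real.exp (ε * f t w) ≤ ∑ w, (Real.cosh ε + f t w * Real.sinh ε) :=
            Finset.sum_le_sum fun w _ => exp_mul_le_aux _ _ (hf t w)
        _ = Fintype.card Ω * Real.cosh ε := by
            rw [Finset.sum_add_distrib, ← Finset.sum_mul, h0]; simp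
        _ ≤ _ := by
            gcongr
            exact Real.cosh_le_exp_half_sq ε
    rw [e1]
    calc _ ≤ (Fintype.card Ω * Real.exp (ε ^ 2 / 2)) ^ N := by
          gcongr
      _ = _ := by
          rw [mul_pow, ← Real.exp_nat_mul]; congr 2; ring
  have hlow : ∀ x : Fin N → Ω, Real.exp (N * ε ^ 2) ≤ ∑ t, Real.exp (ε * ∑ n, f t (x n)) := by
    intro x
    obtain ⟨t, ht⟩ := hcon x
    calc Real.exp (N * ε ^ 2) ≤ Real.exp (ε * ∑ n, f t (x n)) := by
          apply Real.exp_le_exp.2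
          nlinarith
      _ ≤ _ := Finset.single_le_sum (f := fun t => Real.exp (ε * ∑ n, f t (x n)))
          (fun i _ => (Real.exp_pos _).le) (Finset.mem_univ t)
  have h1 := Finset.sum_le_sum fun x (_ : x ∈ (Finset.univ : Finset (Fin N → Ω))) => hlow x
  rw [Finset.sum_comm] at h1
  have h2 := Finset.sum_le_sum fun t (_ : t ∈ (Finset.univ : Finset T)) => hup t
  have h3 := h1.trans h2
  simp only [Finset.sum_const, Finset.card_univ, nsmul_eq_mul, Fintype.card_fun, Fintype.card_fin,
    Nat.cast_pow] at h3
  have hc : (0:ℝ) < (Fintype.card Ω : ℝ) ^ N := by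
    have : 0 < Fintype.card Ω := Fintype.card_pos
    positivity
  have e : Real.exp (N * ε ^ 2) = Real.exp (N * ε ^ 2 / 2) * Real.exp (N * ε ^ 2 / 2) := by
    rw [← Real.exp_add]; congr 1; ring
  rw [e] at h3
  have hp := Real.exp_pos (N * ε ^ 2 / 2)
  have := mul_lt_mul_of_pos_right hT (mul_pos hc hp)
  nlinarith

lemma prod_diff_aux {ι : Type*} (S : Finset ι) (a b : ι → ℝ) (δ : ℝ)
    (ha : ∀ i, a i ∈ Set.Icc (0:ℝ) 1) (hb : ∀ i, b i ∈ Set.Icc (0:ℝ) 1)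
    (hab : ∀ i, |a i - b i| ≤ δ) : |∏ i ∈ S, a i - ∏ i ∈ S, b i| ≤ S.card * δ := by
  classical
  induction S using Finset.induction_on with
  | empty => simp
  | insert i S hi ih =>
    rw [Finset.prod_insert hi, Finset.prod_insert hi, Finset.card_insert_of_notMem hi]
    have hA0 : 0 ≤ ∏ i ∈ S, a i := Finset.prod_nonneg fun i _ => (ha i).1
    have hA1 : ∏ i ∈ S, a i ≤ 1 := Finset.prod_le_one (fun i _ => (ha i).1) fun i _ => (ha i).2
    have e : a i * ∏ i ∈ S, a i - b i * ∏ i ∈ S, b i =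
      (a i - b i) * ∏ i ∈ S, a i + b i * (∏ i ∈ S, a i - ∏ i ∈ S, b i) := by ring
    rw [e]
    refine (abs_add_le _ _).trans ?_
    rw [abs_mul, abs_mul, abs_of_nonneg hA0, abs_of_nonneg (hb i).1]
    have h1 : |a i - b i| * ∏ i ∈ S, a i ≤ δ :=
      (mul_le_of_le_one_right (abs_nonneg _) hA1).trans (hab i)
    have h2 : b i * |∏ i ∈ S, a i - ∏ i ∈ S, b i| ≤ S.card * δ :=
      (mul_le_of_le_one_left (abs_nonneg _) (hb i).2).trans ih
    push_cast
    linarith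

lemma card_box {s m : ℕ} (k : Fin s → Fin (m + 1)) :
    ((univ.filter fun w : Fin s → Fin m => ∀ j, (w j : ℕ) < k j).card : ℝ) = ∏ j, ((k j : ℕ) : ℝ) := by
  have e : (univ.filter fun w : Fin s → Fin m => ∀ j, (w j : ℕ) < k j) =
      Fintype.piFinset fun j => univ.filter fun i : Fin m => (i : ℕ) < k j := by
    ext w; simp [Fintype.mem_piFinset]
  rw [e, Fintype.card_piFinset]
  push_cast
  refine Finset.prod_congr rfl fun j _ => ?_
  have hk : (k j : ℕ) ≤ m := Nat.lt_succ_iff.1 (k j).2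
  rw [Fin.card_filter_val_lt, min_eq_right hk]

lemma exists_points (s N m : ℕ) (hN : 0 < N) (hm : 0 < m) (ε : ℝ) (hε : 0 ≤ ε)
    (h : 2 * ((m : ℝ) + 1) ^ s < Real.exp (N * ε ^ 2 / 2)) :
    ∃ x : Fin N → Fin s → ℝ, (∀ n j, x n j ∈ Set.Ico (0:ℝ) 1) ∧
      ∀ t : Fin s → ℝ, (∀ j, t j ∈ Set.Icc (0:ℝ) 1) → |localDisc x t| ≤ ε + s * (1 / m) := by
  classical
  haveI : Nonempty (Fin m) := ⟨⟨0, hm⟩⟩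
  have hm' : (0:ℝ) < m := by exact_mod_cast hm
  have hN' : (0:ℝ) < N := by exact_mod_cast hN
  let p : (Fin s → Fin (m + 1)) → ℝ := fun k => ∏ j, (((k j : ℕ) : ℝ) / m)
  let g : (Fin s → Fin (m + 1)) → (Fin s → Fin m) → ℝ := fun k w =>
    (if ∀ j, (w j : ℕ) < k j then 1 else 0) - p k
  have hk1 : ∀ (k : Fin s → Fin (m + 1)) j, (((k j : ℕ) : ℝ) / m) ∈ Set.Icc (0:ℝ) 1 := by
    intro k j
    refine ⟨by positivity, ?_⟩
    rw [div_le_one hm']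
    exact_mod_cast Nat.lt_succ_iff.1 (k j).2
  have hp0 : ∀ k, 0 ≤ p k := fun k => Finset.prod_nonneg fun j _ => (hk1 k j).1
  have hp1 : ∀ k, p k ≤ 1 := fun k =>
    Finset.prod_le_one (fun j _ => (hk1 k j).1) fun j _ => (hk1 k j).2
  have hg1 : ∀ k w, |g k w| ≤ 1 := by
    intro k w
    have := hp0 k
    have := hp1 k
    simp only [g]
    rw [abs_le]
    split_ifs <;> constructor <;> linarith
  have hg0 : ∀ k, ∑ w, g k w = 0 := by
    intro k
    simp only [g]
    rw [Finset.sum_sub_distrib, Finset.sum_boole, card_box]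
    simp only [p, Finset.sum_const, Finset.card_univ, nsmul_eq_mul, Fintype.card_fun,
      Fintype.card_fin, Finset.prod_div_distrib, Finset.prod_const, Nat.cast_pow]
    field_simp
    ring
  obtain ⟨y, hy⟩ := exists_good (T := (Fin s → Fin (m + 1)) × Bool) N
    (fun q w => if q.2 then g q.1 w else - g q.1 w)
    (by rintro ⟨k, b⟩ w; cases b <;> simpa using hg1 k w)
    (by rintro ⟨k, b⟩; cases b <;> simp [hg0 k]) ε hε
    (by
      simp only [Fintype.card_prod, Fintype.card_fun, Fintype.card_fin, Fintype.card_bool]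
      push_cast
      linarith)
  refine ⟨fun n j => (y n j : ℕ) / (m : ℝ), fun n j => ⟨by positivity, ?_⟩, fun t ht => ?_⟩
  · rw [div_lt_one hm']
    exact_mod_cast (y n j).2
  have hc : ∀ j, ⌈(m : ℝ) * t j⌉₊ < m + 1 := by
    intro j
    rw [Nat.lt_succ_iff, Nat.ceil_le]
    exact mul_le_of_le_one_right hm'.le (ht j).2
  let k : Fin s → Fin (m + 1) := fun j => ⟨⌈(m : ℝ) * t j⌉₊, hc j⟩
  have hiff : ∀ n, (∀ j, ((y n j : ℕ) : ℝ) / (m : ℝ) < t j) ↔ ∀ j, (y n j : ℕ) < k j := by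
    intro n
    refine forall_congr' fun j => ?_
    simp only [k]
    rw [Nat.lt_ceil, div_lt_iff₀ hm', mul_comm]
  have hsum : ∑ n, g k (y n) =
      ((univ.filter fun n => ∀ j, ((y n j : ℕ) : ℝ) / (m : ℝ) < t j).card : ℝ) - N * p k := by
    simp only [g, hiff]
    rw [Finset.sum_sub_distrib, Finset.sum_boole]
    simp
  have hd : |p k - ∏ j, t j| ≤ s * (1 / m) := by
    have := prod_diff_aux univ (fun j => (((k j : ℕ) : ℝ) / m)) t (1 / m) (hk1 k) ht (by
      intro j
      have h1 := Nat.le_ceil ((m : ℝ) * t j)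
      have h2 := Nat.ceil_lt_add_one (mul_nonneg hm'.le (ht j).1)
      have e : ((k j : ℕ) : ℝ) / m - t j = (((⌈(m : ℝ) * t j⌉₊ : ℕ) : ℝ) - m * t j) / m := by
        simp only [k]; field_simp
      rw [e, abs_of_nonneg (div_nonneg (by linarith) hm'.le)]
      gcongr
      linarith)
    rw [Finset.card_univ, Fintype.card_fin] at this
    exact this
  have ha : |(∑ n, g k (y n)) / N| ≤ ε := by
    have h1 := hy (k, true)
    have h2 := hy (k, false)
    simp at h1 h2
    rw [abs_le, le_div_iff₀ hN', div_le_iff₀ hN']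
    constructor <;> linarith
  have e : localDisc (fun n j => ((y n j : ℕ) : ℝ) / (m : ℝ)) t =
      (∑ n, g k (y n)) / N + (p k - ∏ j, t j) := by
    rw [hsum, localDisc]
    field_simp
    ring
  rw [e]
  exact (abs_add_le _ _).trans (add_le_add ha hd)

/-- `disc(N,s) ≤ C √(s/N) √(log s + log N)` for an absolute constant `C`. -/
theorem minDisc_le_sqrt_log :
    ∃ C : ℝ, 0 < C ∧ ∀ s N : ℕ, 1 ≤ s → 2 ≤ N →
      minDisc N s ≤ C * Real.sqrt ((s : ℝ) / N) * Real.sqrt (Real.log s + Real.log N) := by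
  refine ⟨4, by norm_num, fun s N hs hN => ?_⟩
  have hs' : (1:ℝ) ≤ s := by exact_mod_cast hs
  have hN' : (2:ℝ) ≤ N := by exact_mod_cast hN
  have hM : (2:ℝ) ≤ (s:ℝ) * N := by nlinarith
  have hlog : Real.log s + Real.log N = Real.log ((s:ℝ) * N) :=
    (Real.log_mul (by positivity) (by positivity)).symm
  have hL : (1:ℝ) / 2 ≤ Real.log ((s:ℝ) * N) := by
    have := Real.log_le_log (by norm_num) hM
    have := Real.log_two_gt_d9
    linarith
  rw [hlog, mul_assoc, ← Real.sqrt_mul (by positivity)]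
  set L := Real.log ((s:ℝ) * N) with hLdef
  set R := Real.sqrt ((s:ℝ) / N * L) with hR
  have hR2 : R ^ 2 = (s:ℝ) / N * L := Real.sq_sqrt (by positivity)
  have hR0 : 0 ≤ R := Real.sqrt_nonneg _
  have hNR : N * R ^ 2 = s * L := by rw [hR2]; field_simp
  obtain ⟨x, hx, hd⟩ := exists_points s N (s * N) (by omega) (by positivity) (3 * R) (by positivity) (by
    have e : (N:ℝ) * (3 * R) ^ 2 / 2 = (s:ℝ) * (9 / 2 * L) := by
      rw [mul_pow]; linarith
    have hexp : Real.exp L = (s:ℝ) * N := Real.exp_log (by positivity)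
    rw [e]
    push_cast
    have h1 : (2:ℝ) ≤ 2 ^ s := by
      calc (2:ℝ) = 2 ^ 1 := by norm_num
        _ ≤ 2 ^ s := by gcongr; norm_num
    calc 2 * ((s:ℝ) * N + 1) ^ s ≤ 2 ^ s * ((s:ℝ) * N + 1) ^ s := by gcongr
      _ = (2 * ((s:ℝ) * N + 1)) ^ s := by rw [mul_pow]
      _ ≤ (((s:ℝ) * N) ^ 3) ^ s := by
          gcongr
          nlinarith [mul_nonneg (sub_nonneg.2 hM) (sub_nonneg.2 hM), mul_nonneg (mul_nonneg (sub_nonneg.2 hM) (sub_nonneg.2 hM)) (sub_nonneg.2 hM)]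
      _ = Real.exp (s * (3 * L)) := by
          rw [← hexp, ← Real.exp_nat_mul, ← Real.exp_nat_mul]; norm_num
      _ < _ := by
          apply Real.exp_lt_exp.2
          gcongr
          norm_num)
  have h1N : (s:ℝ) * (1 / ((s * N : ℕ) : ℝ)) ≤ R := by
    apply Real.le_sqrt_of_sq_le
    have : (s:ℝ) * (1 / ((s * N : ℕ) : ℝ)) = 1 / N := by push_cast; field_simp
    rw [this, div_pow, div_mul_eq_mul_div, div_le_div_iff₀ (by positivity) (by positivity)]
    have : (1:ℝ)/2 ≤ s * L := by nlinarith
    nlinarith [mul_le_mul_of_nonneg_right this (sq_nonneg (N:ℝ))]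
  have hstar : starDisc x ≤ 4 * R := by
    apply csSup_le
    · exact ⟨_, fun _ => 0, fun _ => by simp, rfl⟩
    · rintro d ⟨t, ht, rfl⟩
      have := hd t ht
      linarith
  refine le_trans (csInf_le ⟨0, ?_⟩ ⟨x, hx, rfl⟩) hstar
  rintro d ⟨z, -, rfl⟩
  apply Real.sSup_nonneg
  rintro d ⟨t, -, rfl⟩
  exact abs_nonneg _
end

section
/- There exist constants c > 0 and ε₀ > 0 such that for all N, s ∈ ℕ one has disc(N,s) ≥ min(ε₀, c·s/N). -/
open Finset

lemma abs_localDisc_le_two {N s : ℕ} (hN : 1 ≤ N) (x : Fin N → Fin s → ℝ) (t : Fin s → ℝ)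
    (ht : ∀ j, t j ∈ Set.Icc (0:ℝ) 1) : |localDisc x t| ≤ 2 := by
  have h1 : ∏ j, t j ≤ 1 := Finset.prod_le_one (fun j _ => (ht j).1) (fun j _ => (ht j).2)
  have h0 : 0 ≤ ∏ j, t j := Finset.prod_nonneg (fun j _ => (ht j).1)
  have hN' : (0:ℝ) < N := by exact_mod_cast hN
  have hc : ((univ.filter fun n => ∀ j, x n j < t j).card : ℝ) / N ≤ 1 := by
    rw [div_le_one hN']
    have := Finset.card_le_univ (univ.filter fun n => ∀ j, x n j < t j)
    rw [Fintype.card_fin] at this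
    exact_mod_cast this
  have hc0 : 0 ≤ ((univ.filter fun n => ∀ j, x n j < t j).card : ℝ) / N := by positivity
  unfold localDisc
  rw [abs_le]
  constructor <;> linarith

lemma abs_localDisc_le {N s : ℕ} (hN : 1 ≤ N) (x : Fin N → Fin s → ℝ) (t : Fin s → ℝ)
    (ht : ∀ j, t j ∈ Set.Icc (0:ℝ) 1) : |localDisc x t| ≤ starDisc x := by
  apply le_csSup
  · refine ⟨2, ?_⟩
    rintro d ⟨t', ht', rfl⟩
    exact abs_localDisc_le_two hN x t' ht'
  · exact ⟨t, ht, rfl⟩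

lemma starDisc_lower {N s : ℕ} (hN : 1 ≤ N) (hs : 1 ≤ s) (x : Fin N → Fin s → ℝ)
    (hx : ∀ n j, x n j ∈ Set.Ico (0:ℝ) 1) :
    min (1/40) ((1/42) * (s : ℝ) / N) ≤ starDisc x := by
  by_contra! hlt
  obtain ⟨ε, hε⟩ : ∃ ε : ℝ, ε = min (1/40) ((1/42) * (s : ℝ) / N) := ⟨_, rfl⟩
  rw [← hε] at hlt
  have hN' : (0:ℝ) < N := by exact_mod_cast hN
  have hs' : (0:ℝ) < s := by exact_mod_cast hs
  have hε0 : 0 < ε := by rw [hε]; apply lt_min <;> positivity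
  have hε1 : ε ≤ 1/40 := by rw [hε]; exact min_le_left _ _
  have hε2 : ε ≤ (1/42) * (s : ℝ) / N := by rw [hε]; exact min_le_right _ _
  obtain ⟨a, ha⟩ : ∃ a : ℝ, a = 20 * ε / s := ⟨_, rfl⟩
  have has : a * s = 20 * ε := by rw [ha]; field_simp
  have ha0 : 0 < a := by rw [ha]; positivity
  have ha1 : a ≤ 1/2 := by
    have : (1:ℝ) ≤ s := by exact_mod_cast hs
    nlinarith
  -- the counting function
  let t : Finset (Fin s) → Fin s → ℝ := fun J j => if j ∈ J then 1 - a else 1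
  let B : Finset (Fin s) → Finset (Fin N) := fun J => univ.filter fun n => ∀ j, x n j < t J j
  have hB : ∀ J n, n ∈ B J ↔ ∀ j ∈ J, x n j < 1 - a := by
    intro J n
    simp only [B, t, mem_filter, mem_univ, true_and]
    constructor
    · intro h j hj
      simpa [hj] using h j
    · intro h j
      by_cases hj : j ∈ J
      · simpa [hj] using h j hj
      · simpa [hj] using (hx n j).2
  have hdisc : ∀ J, |((B J).card : ℝ) / N - (1 - a) ^ J.card| < ε := by
    intro J
    have h := abs_localDisc_le hN x (t J) (by
      intro j
      simp only [t]
      split_ifs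
      · constructor <;> linarith
      · simp)
    have hp : ∏ j, t J j = (1 - a) ^ J.card := by
      simp [t, Finset.prod_ite]
    unfold localDisc at h
    rw [hp] at h
    exact lt_of_le_of_lt h hlt
  have hpow : ∀ k : ℕ, 1 - k * a ≤ (1 - a) ^ k := by
    intro k
    have := one_add_mul_le_pow (show (-2:ℝ) ≤ -a by linarith) k
    have e : (1:ℝ) + -a = 1 - a := by ring
    rw [e] at this
    linarith
  have hpow2 : ∀ M : ℕ, (1 - a) ^ M * (1 + M * a) ≤ 1 := by
    intro M
    have h1 := one_add_mul_le_pow (show (-2:ℝ) ≤ a by linarith) M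
    have h2 : (0:ℝ) ≤ (1 - a) ^ M := pow_nonneg (by linarith) _
    calc (1 - a) ^ M * (1 + M * a) ≤ (1 - a) ^ M * (1 + a) ^ M :=
          mul_le_mul_of_nonneg_left h1 h2
      _ = ((1 - a) * (1 + a)) ^ M := (mul_pow _ _ _).symm
      _ ≤ 1 := pow_le_one₀ (by nlinarith) (by nlinarith)
  have key : ∀ k : ℕ, 2 * k ≤ s + 1 → ∃ J : Finset (Fin s), J.card = k ∧ (B J).card + k ≤ N := by
    intro k
    induction k with
    | zero =>
      intro _
      refine ⟨∅, rfl, ?_⟩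
      have := Finset.card_le_univ (B ∅)
      rw [Fintype.card_fin] at this
      simpa using this
    | succ k ih =>
      intro hk
      obtain ⟨J, hJ, hcard⟩ := ih (by omega)
      by_cases hex : ∃ j, j ∉ J ∧ ∃ n ∈ B J, 1 - a ≤ x n j
      · obtain ⟨j, hj, n, hn, hnx⟩ := hex
        refine ⟨insert j J, by rw [card_insert_of_notMem hj, hJ], ?_⟩
        have hss : B (insert j J) ⊂ B J := by
          rw [Finset.ssubset_iff_of_subset]
          · refine ⟨n, hn, fun hc => ?_⟩
            have := (hB _ _).1 hc j (mem_insert_self _ _)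
            linarith
          · intro m hm
            rw [hB] at hm ⊢
            exact fun i hi => hm i (mem_insert_of_mem hi)
        have := card_lt_card hss
        omega
      · exfalso
        push Not at hex
        have heq : B univ = B J := by
          ext n
          constructor
          · intro h
            rw [hB] at h ⊢
            exact fun i _ => h i (mem_univ _)
          · intro h
            rw [hB]
            intro j _
            by_cases hj : j ∈ J
            · exact (hB J n).1 h j hj
            · exact hex j hj n h
        have d1 := hdisc J
        have d2 := hdisc univ
        rw [heq, card_univ, Fintype.card_fin] at d2
        rw [hJ] at d1
        rw [abs_lt] at d1 d2
        have hdiff : (1 - a) ^ k - (1 - a) ^ s < 2 * ε := by linarith [d1.1, d2.2, d1.2, d2.1]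
        obtain ⟨M, hM⟩ : ∃ M, s = k + M := ⟨s - k, by omega⟩
        have hMs : (s:ℝ) ≤ 2 * M := by
          have : s ≤ 2 * M := by omega
          exact_mod_cast this
        have hks : (k:ℝ) ≤ s := by
          have : k ≤ s := by omega
          exact_mod_cast this
        have e : (1 - a) ^ s = (1 - a) ^ k * (1 - a) ^ M := by
          rw [← pow_add, ← hM]
        have p1 := hpow k
        have p2 := hpow2 M
        have hka : k * a ≤ 20 * ε := by nlinarith
        have hMa : 10 * ε ≤ M * a := by nlinarith
        have h2 : (0:ℝ) ≤ (1 - a) ^ M := pow_nonneg (by linarith) _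
        rw [e] at hdiff
        generalize (1 - a) ^ k = V at *
        generalize (1 - a) ^ M = W at *
        have hV : 1/2 ≤ V := by linarith
        have hW : W * (1 + 10 * ε) ≤ 1 := by nlinarith
        have hW2 : 4 * ε < 1 - W := by nlinarith
        nlinarith
  obtain ⟨J, hJ, hc⟩ := key ((s + 1) / 2) (by omega)
  have d := (abs_lt.1 (hdisc J)).1
  rw [hJ] at d
  have p := hpow ((s+1)/2)
  have hK1 : (((s+1)/2 : ℕ) : ℝ) ≤ s := by
    have : (s+1)/2 ≤ s := by omega
    exact_mod_cast this
  have hK2 : (s:ℝ) ≤ 2 * (((s+1)/2 : ℕ) : ℝ) := by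
    have : s ≤ 2 * ((s+1)/2) := by omega
    exact_mod_cast this
  have hc' : ((B J).card : ℝ) + (((s+1)/2 : ℕ) : ℝ) ≤ N := by exact_mod_cast hc
  generalize (((s+1)/2 : ℕ) : ℝ) = K at *
  have hKa : K * a ≤ 20 * ε := by nlinarith
  have h3 : 1 - 21 * ε < ((B J).card : ℝ) / N := by linarith
  rw [lt_div_iff₀ hN'] at h3
  rw [le_div_iff₀ hN'] at hε2
  nlinarith

/-- `disc(N,s) ≥ min(ε₀, c s/N)` for constants `c, ε₀ > 0`. -/
theorem minDisc_lower_bound :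
    ∃ c ε₀ : ℝ, 0 < c ∧ 0 < ε₀ ∧ ∀ N s : ℕ, 1 ≤ N → 1 ≤ s →
      min ε₀ (c * (s : ℝ) / N) ≤ minDisc N s := by
  refine ⟨1/42, 1/40, by norm_num, by norm_num, ?_⟩
  intro N s hN hs
  apply le_csInf
  · exact ⟨_, fun _ _ => 0, by simp, rfl⟩
  · rintro d ⟨x, hx, rfl⟩
    exact starDisc_lower hN hs x hx
end

section
/- There exist constants c > 0 and ε₀ > 0 such that for all s ∈ ℕ and all ε ∈ (0, ε₀), the inverse of the star-discrepancy satisfies N(s,ε) ≥ c·s·ε^{−1}. -/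
open Finset

lemma aux_prod_diff {ι : Type*} (S : Finset ι) (a b : ι → ℝ)
    (ha : ∀ j ∈ S, 0 ≤ a j ∧ a j ≤ 1) (hb : ∀ j ∈ S, 0 ≤ b j ∧ b j ≤ 1) :
    |∏ j ∈ S, a j - ∏ j ∈ S, b j| ≤ ∑ j ∈ S, |a j - b j| := by
  classical
  induction S using Finset.induction_on with
  | empty => simp
  | insert i S hi ih =>
    rw [Finset.prod_insert hi, Finset.prod_insert hi, Finset.sum_insert hi]
    have h1 := ih (fun j hj => ha j (Finset.mem_insert_of_mem hj))
      (fun j hj => hb j (Finset.mem_insert_of_mem hj))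
    have hai := ha i (Finset.mem_insert_self _ _)
    have hB0 : 0 ≤ ∏ j ∈ S, b j :=
      Finset.prod_nonneg fun j hj => (hb j (Finset.mem_insert_of_mem hj)).1
    have hB1 : ∏ j ∈ S, b j ≤ 1 :=
      Finset.prod_le_one (fun j hj => (hb j (Finset.mem_insert_of_mem hj)).1)
        fun j hj => (hb j (Finset.mem_insert_of_mem hj)).2
    have e : a i * ∏ j ∈ S, a j - b i * ∏ j ∈ S, b j =
        (a i - b i) * ∏ j ∈ S, b j + a i * (∏ j ∈ S, a j - ∏ j ∈ S, b j) := by ring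
    rw [e]
    refine (abs_add_le _ _).trans ?_
    rw [abs_mul, abs_mul, abs_of_nonneg hB0, abs_of_nonneg hai.1]
    have := mul_le_mul_of_nonneg_left hB1 (abs_nonneg (a i - b i))
    have := mul_le_mul_of_nonneg_right hai.2 (abs_nonneg (∏ j ∈ S, a j - ∏ j ∈ S, b j))
    linarith

lemma aux_one_add {ι : Type*} (S : Finset ι) (u : ι → ℝ) (hu : ∀ j ∈ S, 0 ≤ u j) :
    1 + ∑ j ∈ S, u j ≤ ∏ j ∈ S, (1 + u j) := by
  classical
  induction S using Finset.induction_on with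
  | empty => simp
  | insert i S hi ih =>
    rw [Finset.prod_insert hi, Finset.sum_insert hi]
    have h1 := ih (fun j hj => hu j (Finset.mem_insert_of_mem hj))
    have hi0 := hu i (Finset.mem_insert_self _ _)
    have hs : 0 ≤ ∑ j ∈ S, u j :=
      Finset.sum_nonneg fun j hj => hu j (Finset.mem_insert_of_mem hj)
    nlinarith [mul_le_mul_of_nonneg_left h1 (by linarith : (0:ℝ) ≤ 1 + u i), mul_nonneg hi0 hs]

lemma aux_abs_le_one {N s : ℕ} (x : Fin N → Fin s → ℝ) (t : Fin s → ℝ)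
    (ht : ∀ j, t j ∈ Set.Icc (0:ℝ) 1) : |localDisc x t| ≤ 1 := by
  unfold localDisc
  have h1 : ((univ.filter fun n => ∀ j, x n j < t j).card : ℝ) / N ≤ 1 := by
    apply div_le_one_of_le₀ _ (Nat.cast_nonneg _)
    have := Finset.card_filter_le (univ : Finset (Fin N)) (fun n => ∀ j, x n j < t j)
    rw [Finset.card_univ, Fintype.card_fin] at this
    exact_mod_cast this
  have h0 : 0 ≤ ((univ.filter fun n => ∀ j, x n j < t j).card : ℝ) / N := by positivity
  have p0 : 0 ≤ ∏ j, t j := Finset.prod_nonneg fun j _ => (ht j).1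
  have p1 : ∏ j, t j ≤ 1 := Finset.prod_le_one (fun j _ => (ht j).1) fun j _ => (ht j).2
  rw [abs_le]; constructor <;> linarith

lemma aux_le_starDisc {N s : ℕ} (x : Fin N → Fin s → ℝ) (t : Fin s → ℝ)
    (ht : ∀ j, t j ∈ Set.Icc (0:ℝ) 1) : |localDisc x t| ≤ starDisc x := by
  apply le_csSup
  · refine ⟨1, ?_⟩
    rintro d ⟨t, ht, rfl⟩
    exact aux_abs_le_one x t ht
  · exact ⟨t, ht, rfl⟩

lemma aux_starDisc_nonneg {N s : ℕ} (x : Fin N → Fin s → ℝ) : 0 ≤ starDisc x := by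
  apply Real.sSup_nonneg
  rintro d ⟨t, _, rfl⟩
  exact abs_nonneg _

lemma aux_grid (m s : ℕ) (hm : 0 < m) : minDisc (m ^ s) s ≤ (s : ℝ) / m := by
  have hm' : (0:ℝ) < m := by exact_mod_cast hm
  set x : Fin (m ^ s) → Fin s → ℝ :=
    fun n j => ((finFunctionFinEquiv.symm n j : Fin m) : ℕ) / (m : ℝ) with hx
  have h1 : minDisc (m ^ s) s ≤ starDisc x := by
    apply csInf_le
    · refine ⟨0, ?_⟩
      rintro d ⟨y, _, rfl⟩
      exact aux_starDisc_nonneg y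
    · refine ⟨x, ?_, rfl⟩
      intro n j
      refine ⟨by positivity, ?_⟩
      rw [hx]
      simp only
      rw [div_lt_one hm']
      exact_mod_cast (finFunctionFinEquiv.symm n j).2
  refine h1.trans ?_
  apply Real.sSup_le _ (by positivity)
  rintro d ⟨t, ht, rfl⟩
  unfold localDisc
  have hcount : (univ.filter fun n => ∀ j, x n j < t j).card = ∏ j, ⌈(m:ℝ) * t j⌉₊ := by
    have e1 : (univ.filter fun n => ∀ j, x n j < t j).card =
        (Fintype.piFinset fun j => (univ.filter fun i : Fin m => (i : ℕ) < ⌈(m:ℝ) * t j⌉₊)).card := by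
      apply Finset.card_equiv finFunctionFinEquiv.symm
      intro n
      simp only [Finset.mem_filter, Finset.mem_univ, true_and, Fintype.mem_piFinset]
      refine forall_congr' fun j => ?_
      rw [hx, Nat.lt_ceil]
      simp only
      rw [div_lt_iff₀ hm', mul_comm]
    rw [e1, Fintype.card_piFinset]
    refine Finset.prod_congr rfl fun j _ => ?_
    rw [Fin.card_filter_val_lt]
    apply min_eq_right
    apply Nat.ceil_le.2
    nlinarith [(ht j).2]
  rw [hcount]
  have e2 : ((∏ j, ⌈(m:ℝ) * t j⌉₊ : ℕ) : ℝ) / ((m ^ s : ℕ) : ℝ) = ∏ j, ((⌈(m:ℝ) * t j⌉₊ : ℝ) / m) := by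
    rw [Finset.prod_div_distrib]
    simp
  rw [e2]
  have hc0 : ∀ j, t j ≤ (⌈(m:ℝ) * t j⌉₊ : ℝ) / m := by
    intro j
    rw [le_div_iff₀ hm', mul_comm]
    exact Nat.le_ceil _
  have hc1 : ∀ j, (⌈(m:ℝ) * t j⌉₊ : ℝ) / m ≤ t j + 1 / m := by
    intro j
    rw [div_le_iff₀ hm', add_mul, one_div, inv_mul_cancel₀ hm'.ne', mul_comm (t j)]
    exact (Nat.ceil_lt_add_one (mul_nonneg hm'.le (ht j).1)).le
  have hc2 : ∀ j, (⌈(m:ℝ) * t j⌉₊ : ℝ) / m ≤ 1 := by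
    intro j
    rw [div_le_one hm']
    have : ⌈(m:ℝ) * t j⌉₊ ≤ m := Nat.ceil_le.2 (by nlinarith [(ht j).2])
    exact_mod_cast this
  refine (aux_prod_diff _ _ _ (fun j _ => ⟨(ht j).1.trans (hc0 j), hc2 j⟩)
    (fun j _ => ht j)).trans ?_
  calc ∑ j, |(⌈(m:ℝ) * t j⌉₊ : ℝ) / m - t j| ≤ ∑ j : Fin s, (1 / m : ℝ) := by
        refine Finset.sum_le_sum fun j _ => ?_
        rw [abs_of_nonneg (sub_nonneg.2 (hc0 j))]
        linarith [hc1 j]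
    _ = (s : ℝ) / m := by simp [div_eq_mul_inv]

lemma aux_set_nonempty (s : ℕ) (ε : ℝ) (hε : 0 < ε) :
    ({N : ℕ | 1 ≤ N ∧ minDisc N s ≤ ε}).Nonempty := by
  obtain ⟨m, hm⟩ := exists_nat_gt ((s : ℝ) / ε)
  have hm0 : (0:ℝ) < m := lt_of_le_of_lt (by positivity) hm
  have hm1 : 0 < m := by exact_mod_cast hm0
  refine ⟨m ^ s, Nat.one_le_pow _ _ hm1, (aux_grid m s hm1).trans ?_⟩
  rw [div_lt_iff₀ hε] at hm
  rw [div_le_iff₀ hm0]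
  linarith

/-- the trace of a box -/
noncomputable def auxTrace {N s : ℕ} (x : Fin N → Fin s → ℝ) (t : Fin s → ℝ) : Finset (Fin N) :=
  univ.filter fun n => ∀ j, x n j < t j

lemma aux_shatter {N s : ℕ} (x : Fin N → Fin s → ℝ) (F : Finset (Finset (Fin N)))
    (hF : ∀ A ∈ F, ∃ t, A = auxTrace x t) (S : Finset (Fin N)) (hS : F.Shatters S) :
    S.card ≤ s := by
  classical
  rcases S.eq_empty_or_nonempty with rfl | hne
  · simp
  have hmax : ∀ j, ∃ n ∈ S, ∀ n' ∈ S, x n' j ≤ x n j := fun j =>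
    Finset.exists_max_image S (fun n => x n j) hne
  choose p hp hp2 using hmax
  have hsub : univ.image p ⊆ S := by
    intro n hn
    obtain ⟨j, _, rfl⟩ := Finset.mem_image.1 hn
    exact hp j
  obtain ⟨A, hA, hAS⟩ := hS hsub
  obtain ⟨t, rfl⟩ := hF A hA
  have : S ⊆ univ.image p := by
    intro n hn
    rw [← hAS, Finset.mem_inter]
    refine ⟨hn, ?_⟩
    simp only [auxTrace, Finset.mem_filter, Finset.mem_univ, true_and]
    intro j
    have h1 : p j ∈ S ∩ auxTrace x t := by
      rw [hAS]; exact Finset.mem_image_of_mem _ (Finset.mem_univ _)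
    have h2 := (Finset.mem_inter.1 h1).2
    simp only [auxTrace, Finset.mem_filter, Finset.mem_univ, true_and] at h2
    exact (hp2 j n hn).trans_lt (h2 j)
  calc S.card ≤ (univ.image p).card := Finset.card_le_card this
    _ ≤ (univ : Finset (Fin s)).card := Finset.card_image_le
    _ = s := by simp

lemma aux_sauer {N s : ℕ} (hs : 1 ≤ s) (x : Fin N → Fin s → ℝ) (F : Finset (Finset (Fin N)))
    (hF : ∀ A ∈ F, ∃ t, A = auxTrace x t) :
    (F.card : ℝ) ≤ (Real.exp 1 * ((N + s) / s)) ^ s := by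
  classical
  have hs0 : (0:ℝ) < s := by exact_mod_cast hs
  set y : ℝ := s / (N + s) with hy
  have hy0 : 0 < y := by positivity
  have hy1 : y ≤ 1 := by
    rw [hy, div_le_one (by positivity)]
    linarith [(Nat.cast_nonneg N : (0:ℝ) ≤ N)]
  have h1 : (F.card : ℝ) * y ^ s ≤ (y + 1) ^ N := by
    calc (F.card : ℝ) * y ^ s ≤ (F.shatterer.card : ℝ) * y ^ s := by
          apply mul_le_mul_of_nonneg_right _ (by positivity)
          exact_mod_cast Finset.card_le_card_shatterer F
      _ = ∑ S ∈ F.shatterer, y ^ s := by simp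
      _ ≤ ∑ S ∈ F.shatterer, y ^ S.card * 1 ^ (N - S.card) := by
          refine Finset.sum_le_sum fun S hS => ?_
          rw [one_pow, mul_one]
          exact pow_le_pow_of_le_one hy0.le hy1 (aux_shatter x F hF S (Finset.mem_shatterer.1 hS))
      _ ≤ ∑ S ∈ (univ : Finset (Fin N)).powerset, y ^ S.card * 1 ^ (N - S.card) := by
          apply Finset.sum_le_sum_of_subset_of_nonneg
          · intro S _; simp
          · intros; positivity
      _ = (y + 1) ^ N := by
          have := Finset.sum_pow_mul_eq_add_pow y 1 (univ : Finset (Fin N))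
          simpa using this
  have h2 : (y + 1) ^ N ≤ Real.exp 1 ^ s := by
    calc (y + 1) ^ N ≤ (Real.exp y) ^ N := by
          gcongr
          exact Real.add_one_le_exp y
      _ = Real.exp (N * y) := by rw [← Real.exp_nat_mul]
      _ ≤ Real.exp (s * 1) := by
          apply Real.exp_le_exp.2
          rw [hy, mul_one, ← mul_div_assoc, div_le_iff₀ (by positivity)]
          nlinarith [(Nat.cast_nonneg N : (0:ℝ) ≤ N)]
      _ = Real.exp 1 ^ s := by rw [← Real.exp_nat_mul]
  have h3 : ((N + s : ℝ) / s) = y⁻¹ := by rw [hy, inv_div]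
  rw [h3, mul_pow, inv_pow, ← div_eq_mul_inv, le_div_iff₀ (by positivity)]
  exact h1.trans h2

lemma aux_fiber {s : ℕ} (F : Finset (Fin s → ℕ)) (k0 : Fin s → ℕ)
    (h1 : ∀ k ∈ F, ∀ j, k j ≤ k0 j) (h2 : ∀ k ∈ F, ∑ j, (k0 j - k j) ≤ s) :
    F.card ≤ 4 ^ s := by
  classical
  have key : (F.card : ℝ) * (1/2) ^ s ≤ 2 ^ s := by
    calc (F.card : ℝ) * (1/2) ^ s = ∑ k ∈ F, (1/2 : ℝ) ^ s := by simp
      _ ≤ ∑ k ∈ F, ∏ j, (1/2 : ℝ) ^ (k0 j - k j) := by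
          refine Finset.sum_le_sum fun k hk => ?_
          rw [Finset.prod_pow_eq_pow_sum]
          exact pow_le_pow_of_le_one (by norm_num) (by norm_num) (h2 k hk)
      _ ≤ ∑ k ∈ Fintype.piFinset (fun j => Finset.range (k0 j + 1)),
            ∏ j, (1/2 : ℝ) ^ (k0 j - k j) := by
          apply Finset.sum_le_sum_of_subset_of_nonneg
          · intro k hk
            rw [Fintype.mem_piFinset]
            intro j
            exact Finset.mem_range.2 (Nat.lt_succ_of_le (h1 k hk j))
          · intros; positivity
      _ = ∏ j, ∑ i ∈ Finset.range (k0 j + 1), (1/2 : ℝ) ^ (k0 j - i) := by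
          rw [Finset.prod_univ_sum]
      _ ≤ ∏ j : Fin s, (2:ℝ) := by
          refine Finset.prod_le_prod (fun j _ => by positivity) fun j _ => ?_
          have := Finset.sum_range_reflect (fun i => (1/2:ℝ) ^ i) (k0 j + 1)
          simp only [Nat.add_sub_cancel] at this
          rw [this]
          exact sum_geometric_two_le _
      _ = 2 ^ s := by simp
  have h3 : (F.card : ℝ) ≤ 4 ^ s := by
    rw [one_div, inv_pow, ← div_eq_mul_inv, div_le_iff₀ (by positivity), ← mul_pow] at key
    norm_num at key
    exact key
  exact_mod_cast h3

lemma aux_vol {s : ℕ} (hs : 1 ≤ s) (M : ℕ) (hM : 0 < M) (k k0 : Fin s → ℕ)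
    (h : ∀ j, k j ≤ k0 j) (h0 : ∀ j, k0 j ≤ M) :
    ((∑ j, (k0 j - k j) : ℕ) : ℝ) / (4 * s * M) ≤
      ∏ j, (1 - (k j : ℝ) / (2 * s * M)) - ∏ j, (1 - (k0 j : ℝ) / (2 * s * M)) := by
  have hs0 : (0:ℝ) < s := by exact_mod_cast hs
  have hs1 : (1:ℝ) ≤ s := by exact_mod_cast hs
  have hM0 : (0:ℝ) < M := by exact_mod_cast hM
  have hr0 : ∀ j, 0 ≤ (k0 j : ℝ) / (2 * s * M) := fun j => by positivity
  have hr1 : ∀ j, (k0 j : ℝ) / (2 * s * M) ≤ 1 / (2 * s) := fun j => by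
    rw [div_le_div_iff₀ (by positivity) (by positivity)]
    have : (k0 j : ℝ) ≤ M := by exact_mod_cast h0 j
    nlinarith
  have hhalf : 1 / (2 * s : ℝ) ≤ 1 / 2 := by
    rw [div_le_div_iff₀ (by positivity) (by positivity)]; linarith
  set b : Fin s → ℝ := fun j => 1 - (k0 j : ℝ) / (2 * s * M) with hb
  have hb0 : ∀ j, 0 ≤ b j := fun j => by have := hr1 j; simp only [hb]; linarith
  have hb1 : ∀ j, b j ≤ 1 := fun j => by have := hr0 j; simp only [hb]; linarith
  have hB : 1 / 2 ≤ ∏ j, b j := by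
    have h1 := aux_prod_diff univ (fun _ : Fin s => (1:ℝ)) b (fun _ _ => by norm_num)
      (fun j _ => ⟨hb0 j, hb1 j⟩)
    have h2 : ∑ j : Fin s, |1 - b j| ≤ ∑ j : Fin s, 1 / (2 * s : ℝ) := by
      refine Finset.sum_le_sum fun j _ => ?_
      simp only [hb, sub_sub_cancel]
      rw [abs_of_nonneg (hr0 j)]
      exact hr1 j
    have h3 : ∑ j : Fin s, 1 / (2 * s : ℝ) = 1 / 2 := by
      simp; field_simp
    have h4 := le_abs_self (∏ j : Fin s, (1:ℝ) - ∏ j, b j)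
    simp only [Finset.prod_const_one] at h1 h4
    linarith
  set u : Fin s → ℝ := fun j => ((k0 j : ℝ) - k j) / (2 * s * M) with hu
  have hu0 : ∀ j, 0 ≤ u j := fun j => by
    have : (k j : ℝ) ≤ k0 j := by exact_mod_cast h j
    have : (0:ℝ) ≤ k0 j - k j := by linarith
    simp only [hu]; positivity
  have h5 : ∏ j, (b j * (1 + u j)) ≤ ∏ j, (1 - (k j : ℝ) / (2 * s * M)) := by
    refine Finset.prod_le_prod (fun j _ => mul_nonneg (hb0 j) (by linarith [hu0 j])) fun j _ => ?_
    have e : 1 - (k j : ℝ) / (2 * s * M) = b j + u j := by simp only [hb, hu]; ring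
    rw [e]
    nlinarith [hu0 j, hb1 j]
  rw [Finset.prod_mul_distrib] at h5
  have h6 := aux_one_add univ u (fun j _ => hu0 j)
  have h7 : ((∑ j, (k0 j - k j) : ℕ) : ℝ) / (4 * s * M) = 1 / 2 * ∑ j, u j := by
    have : ((∑ j, (k0 j - k j) : ℕ) : ℝ) = ∑ j, ((k0 j : ℝ) - k j) := by
      rw [Nat.cast_sum]
      exact Finset.sum_congr rfl fun j _ => Nat.cast_sub (h j)
    rw [this]
    simp only [hu]
    rw [← Finset.sum_div]
    field_simp
    norm_num
  rw [h7]
  have hU : 0 ≤ ∑ j, u j := Finset.sum_nonneg fun j _ => hu0 j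
  have h8 := mul_le_mul_of_nonneg_left h6 (by linarith : 0 ≤ ∏ j, b j)
  have h9 := mul_le_mul_of_nonneg_right hB hU
  linarith

lemma aux_main_s5 {N s : ℕ} (hs : 1 ≤ s) (x : Fin N → Fin s → ℝ) (δ : ℝ)
    (hδ : starDisc x ≤ δ) (M : ℕ) (hM : 0 < M) (hMδ : 8 * M * δ ≤ 1) :
    (M : ℝ) ≤ 4 * (Real.exp 1 * ((N + s) / s)) := by
  classical
  have hs0 : (0:ℝ) < s := by exact_mod_cast hs
  have hs1 : (1:ℝ) ≤ s := by exact_mod_cast hs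
  have hM0 : (0:ℝ) < M := by exact_mod_cast hM
  set T : (Fin s → ℕ) → Fin s → ℝ := fun k j => 1 - (k j : ℝ) / (2 * s * M) with hT
  set K : Finset (Fin s → ℕ) := Fintype.piFinset fun _ => Finset.range M with hK
  have hTm : ∀ k : Fin s → ℕ, (∀ j, k j ≤ M) → ∀ j, T k j ∈ Set.Icc (0:ℝ) 1 := by
    intro k hk j
    have h1 : (k j : ℝ) ≤ M := by exact_mod_cast hk j
    have h2 : (k j : ℝ) / (2 * s * M) ≤ 1 := by
      rw [div_le_one (by positivity)]
      nlinarith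
    have h3 : 0 ≤ (k j : ℝ) / (2 * s * M) := by positivity
    constructor <;> simp only [hT] <;> linarith
  have hfib : ∀ A ∈ K.image (fun k => auxTrace x (T k)),
      (K.filter fun k => auxTrace x (T k) = A).card ≤ 4 ^ s := by
    intro A hA
    set F := K.filter fun k => auxTrace x (T k) = A with hF
    have hFne : F.Nonempty := by
      obtain ⟨k, hk, hkA⟩ := Finset.mem_image.1 hA
      exact ⟨k, Finset.mem_filter.2 ⟨hk, hkA⟩⟩
    set k0 : Fin s → ℕ := fun j => F.sup fun k => k j with hk0
    have hle : ∀ k ∈ F, ∀ j, k j ≤ k0 j := fun k hk j =>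
      Finset.le_sup (f := fun k : Fin s → ℕ => k j) hk
    have hatt : ∀ j, ∃ k ∈ F, k0 j = k j := fun j =>
      Finset.exists_mem_eq_sup F hFne fun k => k j
    have hFK : ∀ k ∈ F, ∀ j, k j ≤ M := by
      intro k hk j
      have := (Finset.mem_filter.1 hk).1
      rw [hK, Fintype.mem_piFinset] at this
      exact (Finset.mem_range.1 (this j)).le
    have hk0M : ∀ j, k0 j ≤ M := by
      intro j
      obtain ⟨k, hk, e⟩ := hatt j
      rw [e]; exact hFK k hk j
    have htr : ∀ k ∈ F, auxTrace x (T k0) = auxTrace x (T k) := by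
      intro k hk
      ext n
      simp only [auxTrace, Finset.mem_filter, Finset.mem_univ, true_and]
      constructor
      · intro hn j
        refine (hn j).trans_le ?_
        simp only [hT]
        have : (k j : ℝ) ≤ k0 j := by exact_mod_cast hle k hk j
        gcongr
      · intro hn j
        obtain ⟨k', hk', e⟩ := hatt j
        have h1 : n ∈ auxTrace x (T k') := by
          rw [(Finset.mem_filter.1 hk').2, ← (Finset.mem_filter.1 hk).2]
          simpa [auxTrace] using hn
        simp only [auxTrace, Finset.mem_filter, Finset.mem_univ, true_and] at h1
        have h2 := h1 j
        simp only [hT] at h2 ⊢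
        rw [e]; exact h2
    refine aux_fiber F k0 hle ?_
    intro k hk
    have hv := aux_vol hs M hM k k0 (hle k hk) hk0M
    have d1 := (aux_le_starDisc x (T k) (hTm k (hFK k hk))).trans hδ
    have d2 := (aux_le_starDisc x (T k0) (hTm k0 hk0M)).trans hδ
    have e1 : localDisc x (T k) = ((auxTrace x (T k)).card : ℝ) / N - ∏ j, T k j := rfl
    have e2 : localDisc x (T k0) = ((auxTrace x (T k0)).card : ℝ) / N - ∏ j, T k0 j := rfl
    rw [htr k hk] at e2
    have d3 := (abs_le.1 d1).1
    have d4 := (abs_le.1 d2).2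
    have hv2 : ((∑ j, (k0 j - k j) : ℕ) : ℝ) / (4 * s * M) ≤ ∏ j, T k j - ∏ j, T k0 j := hv
    have hv3 : ((∑ j, (k0 j - k j) : ℕ) : ℝ) / (4 * s * M) ≤ 2 * δ := by linarith
    rw [div_le_iff₀ (by positivity)] at hv3
    have hv4 : ((∑ j, (k0 j - k j) : ℕ) : ℝ) ≤ s := by nlinarith
    exact_mod_cast hv4
  have hcard := Finset.card_le_mul_card_image (f := fun k => auxTrace x (T k)) K (4 ^ s) hfib
  have hKc : K.card = M ^ s := by simp [hK]
  rw [hKc] at hcard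
  have hsau := aux_sauer hs x (K.image fun k => auxTrace x (T k)) (by
    intro A hA
    obtain ⟨k, _, rfl⟩ := Finset.mem_image.1 hA
    exact ⟨T k, rfl⟩)
  have hfin : (M : ℝ) ^ s ≤ (4 * (Real.exp 1 * ((N + s) / s))) ^ s := by
    have h1 : (M : ℝ) ^ s ≤ 4 ^ s * ((K.image fun k => auxTrace x (T k)).card : ℝ) := by
      exact_mod_cast hcard
    rw [mul_pow]
    exact h1.trans (mul_le_mul_of_nonneg_left hsau (by positivity))
  exact le_of_pow_le_pow_left₀ (by omega) (by positivity) hfin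

/-- `N(s,ε) ≥ c s ε⁻¹` for constants `c, ε₀ > 0` and all `ε ∈ (0,ε₀)`. -/
theorem invDisc_lower_bound :
    ∃ c ε₀ : ℝ, 0 < c ∧ 0 < ε₀ ∧ ∀ s : ℕ, 1 ≤ s → ∀ ε : ℝ, ε ∈ Set.Ioo (0:ℝ) ε₀ →
      c * (s : ℝ) / ε ≤ (invDisc s ε : ℝ) := by
  refine ⟨1/1000, 1/1000, by norm_num, by norm_num, ?_⟩
  rintro s hs ε ⟨hε, hε1⟩
  have hs0 : (0:ℝ) < s := by exact_mod_cast hs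
  have hmem : invDisc s ε ∈ {N : ℕ | 1 ≤ N ∧ minDisc N s ≤ ε} :=
    Nat.sInf_mem (aux_set_nonempty s ε hε)
  set N := invDisc s ε with hN
  obtain ⟨hN1, hN2⟩ := hmem
  obtain ⟨d, ⟨x, _, rfl⟩, hx⟩ := exists_lt_of_csInf_lt
    (s := {d : ℝ | ∃ x : Fin N → Fin s → ℝ,
      (∀ n j, x n j ∈ Set.Ico (0:ℝ) 1) ∧ d = starDisc x})
    ⟨_, fun _ _ => 0, by intro n j; simp, rfl⟩
    (lt_of_le_of_lt hN2 (by linarith : ε < 2 * ε))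
  set M := ⌊1 / (16 * ε)⌋₊ with hM
  have hI : 1000 < 1 / ε := by
    rw [lt_div_iff₀ hε]; linarith
  have hI2 : 1 / (16 * ε) = 1 / ε / 16 := by field_simp
  have hM1 : (M : ℝ) ≤ 1 / (16 * ε) := Nat.floor_le (by positivity)
  have hM2 : 1 / (16 * ε) < M + 1 := Nat.lt_floor_add_one _
  have hM3 : (0:ℝ) < M := by rw [hI2] at hM2; linarith
  have h := aux_main_s5 hs x (2 * ε) hx.le M (by exact_mod_cast hM3) (by
    rw [le_div_iff₀ (by positivity)] at hM1
    linarith)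
  have he : Real.exp 1 < 2.75 := Real.exp_one_lt_d9.trans (by norm_num)
  have hNs : ((N : ℝ) + s) / s = N / s + 1 := by field_simp
  rw [hNs] at h
  have hp : 0 ≤ (N : ℝ) / s := by positivity
  have h2 : (M : ℝ) ≤ 11 * (N / s + 1) := by nlinarith
  have h3 : 1 / 1000 * (1 / ε) ≤ (N : ℝ) / s := by
    rw [hI2] at hM2; linarith
  rw [le_div_iff₀ hs0] at h3
  calc 1 / 1000 * (s : ℝ) / ε = 1 / 1000 * (1 / ε) * s := by ring
    _ ≤ N := h3
end

section
/- Let f : [0,1] → ℝ be absolutely continuous with derivative f′ (i.e., f(x) = f(0) + ∫₀ˣ f′(t) dt for all x ∈ [0,1], with f′ integrable on [0,1]), and let x_0, …, x_{N−1} ∈ [0,1]. Then |∫₀¹ f(x) dx − (1/N)∑_{n=0}^{N−1} f(x_n)| ≤ (∫₀¹ |f′(t)| dt) · sup_{0 ≤ t ≤ 1} |(1/N)·#{n ∈ {0,…,N−1} : x_n ≤ t} − t|. -/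
open Finset MeasureTheory

theorem koksma_aux (f' : ℝ → ℝ) (hf' : IntervalIntegrable f' volume 0 1) (a : ℝ)
    (ha : a ∈ Set.Icc (0:ℝ) 1) :
    ∫ t in Set.Ioc (0:ℝ) 1, (Set.Ici a).indicator f' t = ∫ t in a..1, f' t := by
  rw [intervalIntegral.integral_of_le ha.2, setIntegral_indicator measurableSet_Ici]
  apply setIntegral_congr_set
  have h1 : (Set.Ioi a : Set ℝ) =ᵐ[volume] Set.Ici a := Ioi_ae_eq_Ici
  have h2 : (Set.Ioc (0:ℝ) 1 ∩ Set.Ici a : Set ℝ) =ᵐ[volume] (Set.Ioc (0:ℝ) 1 ∩ Set.Ioi a : Set ℝ) :=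
    (ae_eq_refl _).inter h1.symm
  suffices h3 : (Set.Ioc (0:ℝ) 1 ∩ Set.Ioi a : Set ℝ) = Set.Ioc a 1 by
    rw [h3] at h2; exact h2
  ext t
  simp only [Set.mem_inter_iff, Set.mem_Ioc, Set.mem_Ioi]
  have := ha.1
  constructor
  · rintro ⟨⟨_, h⟩, h'⟩; exact ⟨h', h⟩
  · rintro ⟨h', h⟩; exact ⟨⟨by linarith, h⟩, h'⟩

theorem koksma_fubini (f' : ℝ → ℝ) (hf' : IntervalIntegrable f' volume 0 1) :
    Integrable (fun s => ∫ t in Set.Ioc (0:ℝ) 1, (Set.Ici s).indicator f' t)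
      (volume.restrict (Set.Ioc (0:ℝ) 1)) ∧
    ∫ s in Set.Ioc (0:ℝ) 1, ∫ t in Set.Ioc (0:ℝ) 1, (Set.Ici s).indicator f' t
      = ∫ t in Set.Ioc (0:ℝ) 1, t * f' t := by
  have hi : Integrable f' (volume.restrict (Set.Ioc (0:ℝ) 1)) :=
    (intervalIntegrable_iff_integrableOn_Ioc_of_le zero_le_one).1 hf'
  have hG : Integrable (Function.uncurry fun s t : ℝ => (Set.Ici s).indicator f' t)
      ((volume.restrict (Set.Ioc (0:ℝ) 1)).prod (volume.restrict (Set.Ioc (0:ℝ) 1))) := by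
    have h0 : Integrable (fun p : ℝ × ℝ => f' p.2)
      ((volume.restrict (Set.Ioc (0:ℝ) 1)).prod (volume.restrict (Set.Ioc (0:ℝ) 1))) := hi.comp_snd _
    have hm : MeasurableSet {p : ℝ × ℝ | p.1 ≤ p.2} := measurableSet_le measurable_fst measurable_snd
    refine (h0.indicator hm).congr (Filter.Eventually.of_forall ?_)
    rintro ⟨s, t⟩
    simp [Set.indicator, Function.uncurry]
  refine ⟨hG.integral_prod_left, ?_⟩
  rw [integral_integral_swap hG]
  apply setIntegral_congr_fun measurableSet_Ioc
  intro t ht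
  have : (fun s : ℝ => (Set.Ici s).indicator f' t) = (Set.Iic t).indicator (fun _ => f' t) := by
    ext s; simp [Set.indicator]
  simp only [this]
  rw [setIntegral_indicator measurableSet_Iic, setIntegral_const]
  have h3 : Set.Ioc (0:ℝ) 1 ∩ Set.Iic t = Set.Ioc 0 t := by
    ext s; simp only [Set.mem_inter_iff, Set.mem_Ioc, Set.mem_Iic]
    constructor
    · rintro ⟨⟨h, _⟩, h'⟩; exact ⟨h, h'⟩
    · rintro ⟨h, h'⟩; exact ⟨⟨h, h'.trans ht.2⟩, h'⟩
  rw [h3]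
  simp [Measure.real, ht.1.le]

/-- one-dimensional Koksma inequality. If `f` is absolutely continuous
with derivative `f'` and `x_0, …, x_{N-1} ∈ [0,1]`, then
`|∫₀¹ f − (1/N) ∑ f(x_n)| ≤ (∫₀¹ |f'|) · D*`, where `D*` is the star-discrepancy
`sup_{t ∈ [0,1]} |#{n : x_n ≤ t}/N − t|`. -/
theorem koksma_one_dimensional (f f' : ℝ → ℝ)
    (hf' : IntervalIntegrable f' volume 0 1)
    (hf : ∀ x ∈ Set.Icc (0:ℝ) 1, f x = f 0 + ∫ t in (0:ℝ)..x, f' t)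
    (N : ℕ) (hN : 0 < N) (x : Fin N → ℝ) (hx : ∀ n, x n ∈ Set.Icc (0:ℝ) 1) :
    |(∫ t in (0:ℝ)..1, f t) - (1 / (N : ℝ)) * ∑ n, f (x n)| ≤
      (∫ t in (0:ℝ)..1, |f' t|) *
        sSup {d : ℝ | ∃ t ∈ Set.Icc (0:ℝ) 1,
          d = |((univ.filter fun n => x n ≤ t).card : ℝ) / N - t|} := by
  have hN' : (0:ℝ) < N := by exact_mod_cast hN
  have hi : Integrable f' (volume.restrict (Set.Ioc (0:ℝ) 1)) :=
    (intervalIntegrable_iff_integrableOn_Ioc_of_le zero_le_one).1 hf'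
  set D := sSup {d : ℝ | ∃ t ∈ Set.Icc (0:ℝ) 1,
          d = |((univ.filter fun n => x n ≤ t).card : ℝ) / N - t|} with hD
  have hle : ∀ t ∈ Set.Icc (0:ℝ) 1, |((univ.filter fun n => x n ≤ t).card : ℝ) / N - t| ≤ D := by
    intro t ht
    refine le_csSup ⟨1, ?_⟩ ⟨t, ht, rfl⟩
    rintro d ⟨s, hs, rfl⟩
    have h1 : ((univ.filter fun n => x n ≤ s).card : ℝ) / N ≤ 1 := by
      rw [div_le_one hN']
      have := Finset.card_le_univ (univ.filter fun n => x n ≤ s)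
      rw [Fintype.card_fin] at this
      exact_mod_cast this
    have h2 : 0 ≤ ((univ.filter fun n => x n ≤ s).card : ℝ) / N := by positivity
    rw [abs_le]; constructor <;> linarith [hs.1, hs.2]
  have key : ∀ a ∈ Set.Icc (0:ℝ) 1,
      f a = f 1 - ∫ t in Set.Ioc (0:ℝ) 1, (Set.Ici a).indicator f' t := by
    intro a ha
    rw [koksma_aux f' hf' a ha, hf a ha, hf 1 (by simp)]
    have h0a : IntervalIntegrable f' volume 0 a :=
      hf'.mono_set (by rw [Set.uIcc_of_le ha.1, Set.uIcc_of_le zero_le_one]; exact Set.Icc_subset_Icc_right ha.2)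
    have ha1 : IntervalIntegrable f' volume a 1 :=
      hf'.mono_set (by rw [Set.uIcc_of_le ha.2, Set.uIcc_of_le zero_le_one]; exact Set.Icc_subset_Icc_left ha.1)
    rw [← intervalIntegral.integral_add_adjacent_intervals h0a ha1]; ring
  obtain ⟨hF1, hF2⟩ := koksma_fubini f' hf'
  have hint : ∫ t in (0:ℝ)..1, f t = f 1 - ∫ t in Set.Ioc (0:ℝ) 1, t * f' t := by
    rw [intervalIntegral.integral_of_le zero_le_one, ← hF2,
      setIntegral_congr_fun measurableSet_Ioc (fun a ha => key a (Set.Ioc_subset_Icc_self ha)),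
      integral_sub (integrable_const _) hF1]
    simp
  have hind : ∀ n, Integrable ((Set.Ici (x n)).indicator f') (volume.restrict (Set.Ioc (0:ℝ) 1)) :=
    fun n => hi.indicator measurableSet_Ici
  have htf : Integrable (fun t => t * f' t) (volume.restrict (Set.Ioc (0:ℝ) 1)) := by
    refine hi.bdd_mul (c := 1) measurable_id.aestronglyMeasurable ?_
    filter_upwards [ae_restrict_mem measurableSet_Ioc] with t ht
    rw [Real.norm_eq_abs, abs_of_pos ht.1]; exact ht.2
  have hsum : (1 / (N : ℝ)) * ∑ n, f (x n) = f 1 - ∫ t in Set.Ioc (0:ℝ) 1,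
      (1 / (N:ℝ)) * ∑ n, (Set.Ici (x n)).indicator f' t := by
    rw [integral_const_mul, integral_finsetSum _ (fun n _ => hind n),
      Finset.sum_congr rfl (fun n _ => key (x n) (hx n)), Finset.sum_sub_distrib]
    simp only [sum_const, card_univ, Fintype.card_fin, nsmul_eq_mul]
    field_simp
  have hsumI : Integrable (fun t => (1 / (N:ℝ)) * ∑ n, (Set.Ici (x n)).indicator f' t)
      (volume.restrict (Set.Ioc (0:ℝ) 1)) :=
    (integrable_finsetSum _ (fun n _ => hind n)).const_mul _
  rw [hint, hsum, sub_sub_sub_cancel_left, ← integral_sub hsumI htf,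
    intervalIntegral.integral_of_le zero_le_one, ← integral_mul_const, ← Real.norm_eq_abs]
  refine norm_integral_le_of_norm_le (hi.abs.mul_const D) ?_
  filter_upwards [ae_restrict_mem measurableSet_Ioc] with t ht
  have e : (1 / (N:ℝ)) * ∑ n, (Set.Ici (x n)).indicator f' t - t * f' t
      = f' t * (((univ.filter fun n => x n ≤ t).card : ℝ) / N - t) := by
    simp only [Set.indicator, Set.mem_Ici]
    rw [← Finset.sum_filter, sum_const, nsmul_eq_mul]
    ring
  rw [e, Real.norm_eq_abs, abs_mul]
  exact mul_le_mul_of_nonneg_left (hle t (Set.Ioc_subset_Icc_self ht)) (abs_nonneg _)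
end
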